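/- Let m and p be positive integers, set l = 4mp+1, t = 4mp−2p+1 and p' = 2mp, let N be a positive integer, and let q be a nonzero complex number with (q;q)_{N−1} ≠ 0. Then, with a(n), b₁(n), b₂(n), X(n) as defined in the context (all exponents of q occurring are integers), Σ_{N−1 ≥ n_{p'} ≥ ⋯ ≥ n_1 ≥ 0} q^{a(n)N + b₁(n) + b₂(n)} X(n) = Σ_{N−1 ≥ n_{2mp} ≥ ⋯ ≥ n_1 ≥ 0} (q^{1−N};q)_{n_{2mp}} (−1)^{n_{2mp}} q^{−n_{2mp}(n_{2mp}+1)/2} · ∏_{1 ≤ i < j ≤ 2mp, m ∤ i} q^{Δ_{i,j,m} n_i n_j} · ∏_{i=1}^{2p−1} (−1)^{n_{mi}} q^{(−1)^{i+1} N n_{mi} + n_{mi}(n_{mi}+1)/2} · ∏_{i=1}^{2mp−1} q^{β_{i,m} n_i} [n_{i+1}; n_i]_q. -/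

import Mathlib

open Finset

noncomputable section

/-- The q-Pochhammer symbol `(a; q)_n = ∏_{k=0}^{n-1} (1 - a q^k)`. -/
def qPoch (a q : ℂ) (n : ℕ) : ℂ := ∏ k ∈ Finset.range n, (1 - a * q ^ k)

/-- The Gaussian binomial coefficient `[n; k]_q` as a polynomial in `q` over `ℤ`,
defined by the q-Pascal rule `[n; k] = [n-1; k-1] + q^k [n-1; k]`.  It is the
polynomial equal to `(q;q)_n / ((q;q)_{n-k} (q;q)_k)`. -/
def gaussPoly : ℕ → ℕ → Polynomial ℤ
  | _, 0 => 1
  | 0, _ + 1 => 0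
  | n + 1, k + 1 => gaussPoly n k + Polynomial.X ^ (k + 1) * gaussPoly n (k + 1)

/-- The Gaussian binomial coefficient `[n; k]_q` evaluated at `q : ℂ`. -/
def gbin (q : ℂ) (n k : ℕ) : ℂ := Polynomial.aeval q (gaussPoly n k)

/-- `σ_j = (-1)^⌊(2j-1)t/l⌋`. -/
def sigmaT (l t j : ℕ) : ℤ := (-1) ^ ((2 * j - 1) * t / l)

/-- `r(j)`: the unique integer with `r(j) ≡ (2j-1)t (mod 2l)` and `-l < r(j) < l`. -/
def rT (l t j : ℕ) : ℤ :=
  if (((2 * j - 1) * t % (2 * l) : ℕ) : ℤ) < (l : ℤ) then (((2 * j - 1) * t % (2 * l) : ℕ) : ℤ)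
  else (((2 * j - 1) * t % (2 * l) : ℕ) : ℤ) - 2 * (l : ℤ)

/-- `r'(j) = (|r(j)| + 1)/2`. -/
def rpT (l t j : ℕ) : ℕ := ((rT l t j).natAbs + 1) / 2

open Classical in
/-- `i_k`: the unique `j ∈ {1, …, (l-1)/2}` with `r'(j) = k`. -/
def iT (l t k : ℕ) : ℕ :=
  if h : ∃ j, j ∈ Finset.Icc 1 ((l - 1) / 2) ∧ rpT l t j = k then h.choose else 0

/-- `ε_{i,j,m}`: `1` if `j ≡ -i, -i-1 (mod 2m)`, `-1` if `j ≡ i, i-1 (mod 2m)`,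
`0` otherwise (and `0` when `m ∣ i`, a case excluded in all uses). -/
def epsLO (m i j : ℕ) : ℤ :=
  if m ∣ i then 0
  else if 2 * m ∣ (i + j) ∨ 2 * m ∣ (i + j + 1) then 1
  else if (2 * (m : ℤ)) ∣ ((j : ℤ) - (i : ℤ)) ∨ (2 * (m : ℤ)) ∣ ((j : ℤ) - (i : ℤ) + 1) then -1
  else 0

/-- `Δ_{i,j,m}`: `1` if `j ≡ -i, -i+1 (mod 2m)`, `-1` if `j ≡ i, i+1 (mod 2m)`,
`0` otherwise (and `0` when `m ∣ i`, a case excluded in all uses). -/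
def deltaLO (m i j : ℕ) : ℤ :=
  if m ∣ i then 0
  else if 2 * m ∣ (i + j) ∨ 2 * m ∣ (i + j - 1) then 1
  else if (2 * (m : ℤ)) ∣ ((j : ℤ) - (i : ℤ)) ∨ (2 * (m : ℤ)) ∣ ((j : ℤ) - (i : ℤ) - 1) then -1
  else 0

/-- `γ_{i,m} = 1` if `i ≡ 1, …, m-1 (mod 2m)` and `-1` otherwise. -/
def gamLO (m i : ℕ) : ℤ :=
  if 1 ≤ i % (2 * m) ∧ i % (2 * m) ≤ m - 1 then 1 else -1

/-- `β_{i,m} = 1` if `i ≡ 1, …, m-1 (mod 2m)`, `-1` if `i ≡ m+1, …, 2m-1 (mod 2m)`,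
and `0` if `m ∣ i`. -/
def betLO (m i : ℕ) : ℤ :=
  if 1 ≤ i % (2 * m) ∧ i % (2 * m) ≤ m - 1 then 1
  else if m + 1 ≤ i % (2 * m) ∧ i % (2 * m) ≤ 2 * m - 1 then -1
  else 0

/-- Extend a tuple `f : Fin P → Fin N` to `n : ℕ → ℕ` with `n i = f (i-1)` for
`1 ≤ i ≤ P` and `n i = 0` otherwise (in particular `n 0 = 0`). -/
def extTup (P N : ℕ) (f : Fin P → Fin N) : ℕ → ℕ :=
  fun i => if h : 1 ≤ i ∧ i ≤ P then (f ⟨i - 1, by omega⟩ : ℕ) else 0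

/-- Takata's exponent `a(n)` (an integer; every integer division below is exact). -/
def aT (l t : ℕ) (n : ℕ → ℕ) : ℤ :=
  -(∑ j ∈ Icc 1 ((l - 1) / 2), (∑ k ∈ Icc (rpT l t j) ((l - 1) / 2),
      (sigmaT l t (iT l t k) + sigmaT l t (iT l t ((l - 1) / 2 + 1 - k))) / 2) *
      ((n j : ℤ) - (n (j - 1) : ℤ)))
  - ∑ j ∈ Icc 1 ((l - 1) / 2 - 1), ((sigmaT l t (j + 1) + sigmaT l t ((l - 1) / 2 + 1 - j)) / 2) * (n j : ℤ)
  - ((sigmaT l t ((l - 1) / 2) + 1) / 2) * (n ((l - 1) / 2) : ℤ)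
  - ∑ j ∈ Icc 1 ((l - 1) / 2), sigmaT l t j

/-- Takata's exponent `b₁(n)` (an integer; every integer division below is exact
whenever the factor it multiplies is nonzero). -/
def b1T (l t : ℕ) (n : ℕ → ℕ) : ℤ :=
  -aT l t n
  + ∑ k ∈ Icc 1 ((l - t) / 2), ((1 - sigmaT l t (iT l t k)) / 2) * (n (iT l t k - 1) : ℤ)
  - ∑ k ∈ Icc ((l - t) / 2 + 1) ((l - 1) / 2), (n (iT l t k - 1) : ℤ)
  + ∑ k ∈ Icc ((l - t) / 2 + 1) ((l - 1) / 2), ((1 + sigmaT l t (iT l t k)) / 2) * (n (iT l t k) : ℤ)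
  - (1 + sigmaT l t ((l - 1) / 2)) * (n ((l - 1) / 2) : ℤ)
  + ∑ j ∈ Icc 1 ((l - 1) / 2 - 1), ((sigmaT l t (j + 1) - sigmaT l t j) / 2) * (n j : ℤ)
  - ∑ k ∈ Icc 1 ((l - 1) / 2 - 1), ∑ k' ∈ Icc (k + 1) ((l - 1) / 2),
      ((1 + Int.sign ((iT l t k : ℤ) - (iT l t k' : ℤ))) / 2) *
        ((sigmaT l t (iT l t k) - sigmaT l t (iT l t k')) / 2) *
        ((n (iT l t k) : ℤ) - (n (iT l t k - 1) : ℤ)) *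
        ((n (iT l t k') : ℤ) - (n (iT l t k' - 1) : ℤ))
  + ∑ j ∈ Icc 1 ((l - 1) / 2), sigmaT l t j *
      (∑ k ∈ Icc 1 (rpT l t j), ((n (iT l t k) : ℤ) - (n (iT l t k - 1) : ℤ))) * (n (j - 1) : ℤ)

/-- Takata's exponent `b₂(n)`. -/
def b2T (l t : ℕ) (n : ℕ → ℕ) : ℤ :=
  if l < 2 * t then
    ∑ k ∈ Icc ((l - t) / 2 + 1) ((t - 1) / 2),
      ((1 + sigmaT l t (iT l t k)) / 2) * (n (iT l t k - 1) : ℤ)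
  else
    -∑ k ∈ Icc ((t + 1) / 2 + 1) ((l - t) / 2),
      ((1 + sigmaT l t (iT l t k)) / 2) * (n (iT l t k - 1) : ℤ)

/-- Takata's `κ(p')`. -/
def kapT (l t N : ℕ) (n : ℕ → ℕ) : ℤ :=
  if sigmaT l t ((l - 1) / 2) = -1 then -(N : ℤ) * (n ((l - 1) / 2) : ℤ) else 0

/-- Takata's `τ(j)`. -/
def tauT (l t : ℕ) (q : ℂ) (n : ℕ → ℕ) (j : ℕ) : ℂ :=
  if sigmaT l t j = -1 then (-1 : ℂ) ^ (n j - n (j - 1))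
  else q ^ ((((n j : ℤ) - (n (j - 1) : ℤ)) * (((n j : ℤ) - (n (j - 1) : ℤ)) + 1)) / 2)

/-- Takata's `X(n)`. -/
def XT (l t N : ℕ) (q : ℂ) (n : ℕ → ℕ) : ℂ :=
  (-1 : ℂ) ^ (n ((l - 1) / 2)) * q ^ kapT l t N n *
    (qPoch q q (N - 1) * qPoch q q (n ((l - 1) / 2)) / qPoch q q (N - n ((l - 1) / 2) - 1)) *
    ∏ j ∈ Icc 1 ((l - 1) / 2), tauT l t q n j / qPoch q q (n j - n (j - 1))

/-- The parameters `l = 4mp+1`, `t = 4mp-2p+1` of the double twist knot. -/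
structure DoubleTwist (m p l t : ℕ) : Prop where
  hm : 0 < m
  hp : 0 < p
  hl : l = 4 * m * p + 1
  ht : t = 4 * m * p - 2 * p + 1

namespace DoubleTwist

variable {m p l t : ℕ}

theorem half_sub_one (h : DoubleTwist m p l t) : (l - 1) / 2 = 2 * m * p := by
  rw [h.hl, show 4 * m * p = 2 * (2 * m * p) by ring]; omega

theorem t_eq (h : DoubleTwist m p l t) {u w : ℕ} (hm : m = w + u + 1) :
    t = 4 * (w + u) * p + 2 * p + 1 := by
  rw [h.ht, hm, show 4 * (w + u + 1) * p = 4 * (w + u) * p + 4 * p by ring]; omega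

theorem half_sub (h : DoubleTwist m p l t) : (l - t) / 2 = p := by
  obtain ⟨u, rfl⟩ := Nat.exists_eq_add_of_lt h.hm
  rw [h.t_eq (u := u) (w := 0) (by omega), h.hl,
    show 4 * (0 + u + 1) * p = 4 * (0 + u) * p + 4 * p by ring]
  omega

theorem half_t (h : DoubleTwist m p l t) : (t - 1) / 2 = 2 * m * p - p := by
  obtain ⟨u, rfl⟩ := Nat.exists_eq_add_of_lt h.hm
  rw [h.t_eq (u := u) (w := 0) (by omega),
    show 2 * (0 + u + 1) * p = 2 * (0 + u) * p + 2 * p by ring,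
    show 4 * (0 + u) * p = 2 * (2 * (0 + u) * p) by ring]
  omega

theorem lt_two_mul (h : DoubleTwist m p l t) : l < 2 * t := by
  obtain ⟨u, rfl⟩ := Nat.exists_eq_add_of_lt h.hm
  rw [h.t_eq (u := u) (w := 0) (by omega), h.hl,
    show 4 * (0 + u + 1) * p = 4 * (0 + u) * p + 4 * p by ring]
  have := h.hp
  omega

theorem mul_eq_lower (h : DoubleTwist m p l t) {v w : ℕ} (hw : w < m) :
    ∃ g, (2 * (2 * m * v + m - w) - 1) * t = l * (2 * g) + (4 * p * w + 2 * p + 2 * v + 1) := by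
  obtain ⟨u, hu⟩ := Nat.exists_eq_add_of_lt hw
  refine ⟨2 * (w + u) * v + v + u, ?_⟩
  rw [show 2 * (2 * m * v + m - w) - 1 = 2 * (2 * m * v) + 2 * u + 1 by omega, h.t_eq hu, h.hl, hu]
  ring

theorem mul_eq_upper (h : DoubleTwist m p l t) {v w : ℕ} (hv : v < p) (hw : w < m) :
    ∃ g r, (2 * (2 * m * v + m + w + 1) - 1) * t = l * (2 * g + 1) + r ∧
      r + (4 * p * w + 2 * (p - v) - 1) = l := by
  obtain ⟨u, hu⟩ := Nat.exists_eq_add_of_lt hw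
  obtain ⟨c, hc⟩ := Nat.exists_eq_add_of_lt hv
  refine ⟨2 * (w + u) * v + v + 2 * w + u, 4 * u * p + 2 * p + 2 * v + 2, ?_, ?_⟩
  · rw [show 2 * (2 * m * v + m + w + 1) - 1 = 2 * (2 * m * v) + 2 * m + 2 * w + 1 by omega,
      h.t_eq hu, h.hl, hu]
    ring
  · rw [show 4 * p * w + 2 * (p - v) - 1 = 4 * p * w + 2 * c + 1 by omega, h.hl, hu, hc]
    ring

theorem lower_lt (h : DoubleTwist m p l t) {v w : ℕ} (hv : v < p) (hw : w < m) :
    4 * p * w + 2 * p + 2 * v + 1 < l := by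
  obtain ⟨u, hu⟩ := Nat.exists_eq_add_of_lt hw
  rw [h.hl, hu, show 4 * (w + u + 1) * p = 4 * p * w + 4 * u * p + 4 * p by ring]
  omega

theorem sigma_lower (h : DoubleTwist m p l t) {v w : ℕ} (hv : v < p) (hw : w < m) :
    sigmaT l t (2 * m * v + m - w) = 1 := by
  obtain ⟨g, hg⟩ := h.mul_eq_lower (v := v) hw
  have hlt := h.lower_lt hv hw
  rw [sigmaT, hg, Nat.mul_add_div (by omega), Nat.div_eq_of_lt hlt, add_zero, pow_mul]
  simp

theorem sigma_upper (h : DoubleTwist m p l t) {v w : ℕ} (hv : v < p) (hw : w < m) :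
    sigmaT l t (2 * m * v + m + w + 1) = -1 := by
  obtain ⟨g, r, hg, hr⟩ := h.mul_eq_upper hv hw
  rw [sigmaT, hg, Nat.mul_add_div (by omega), Nat.div_eq_of_lt (by omega), add_zero, pow_succ,
    pow_mul]
  simp

theorem rp_lower (h : DoubleTwist m p l t) {v w : ℕ} (hv : v < p) (hw : w < m) :
    rpT l t (2 * m * v + m - w) = 2 * p * w + p + v + 1 := by
  obtain ⟨g, hg⟩ := h.mul_eq_lower (v := v) hw
  have hlt := h.lower_lt hv hw
  have hmod : (2 * (2 * m * v + m - w) - 1) * t % (2 * l) = 4 * p * w + 2 * p + 2 * v + 1 := by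
    rw [hg, show l * (2 * g) = 2 * l * g by ring, Nat.mul_add_mod, Nat.mod_eq_of_lt (by omega)]
  rw [rpT, rT, hmod, if_pos (by exact_mod_cast hlt), Int.natAbs_natCast,
    show 4 * p * w = 2 * (2 * p * w) by ring]
  omega

theorem rp_upper (h : DoubleTwist m p l t) {v w : ℕ} (hv : v < p) (hw : w < m) :
    rpT l t (2 * m * v + m + w + 1) = 2 * p * w + p - v := by
  obtain ⟨g, r, hg, hr⟩ := h.mul_eq_upper hv hw
  have hmod : (2 * (2 * m * v + m + w + 1) - 1) * t % (2 * l) = l + r := by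
    rw [hg, show l * (2 * g + 1) + r = 2 * l * g + (l + r) by ring, Nat.mul_add_mod,
      Nat.mod_eq_of_lt (by omega)]
  rw [show 4 * p * w = 2 * (2 * p * w) by ring] at hr
  rw [rpT, rT, hmod, if_neg (by push_cast; omega)]
  omega

theorem exists_of_mem {j : ℕ} (hm : 0 < m) (hj : j ∈ Icc 1 (2 * m * p)) :
    ∃ v < p, ∃ w < m, j = 2 * m * v + m - w ∨ j = 2 * m * v + m + w + 1 := by
  rw [mem_Icc] at hj
  have hdiv := Nat.div_add_mod (j - 1) (2 * m)
  have hmod := Nat.mod_lt (j - 1) (show 0 < 2 * m by omega)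
  have hv : (j - 1) / (2 * m) < p := Nat.div_lt_of_lt_mul (by omega)
  generalize (j - 1) / (2 * m) = v at *
  generalize (j - 1) % (2 * m) = y at *
  rcases Nat.lt_or_ge y m with hy | hy
  · exact ⟨v, hv, m - 1 - y, by omega, Or.inl (by omega)⟩
  · exact ⟨v, hv, y - m, by omega, Or.inr (by omega)⟩

theorem lower_mem {v w : ℕ} (hv : v < p) (hw : w < m) :
    2 * m * v + m - w ∈ Icc 1 (2 * m * p) := by
  have : 2 * m * (v + 1) ≤ 2 * m * p := Nat.mul_le_mul_left _ hv
  rw [mul_add] at this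
  rw [mem_Icc]
  omega

theorem upper_mem {v w : ℕ} (hv : v < p) (hw : w < m) :
    2 * m * v + m + w + 1 ∈ Icc 1 (2 * m * p) := by
  have : 2 * m * (v + 1) ≤ 2 * m * p := Nat.mul_le_mul_left _ hv
  rw [mul_add] at this
  rw [mem_Icc]
  omega

/-- Comparing numbers in base `c`. -/
theorem base_lt {c a b x y : ℕ} (hab : a < b) (hx : x < c) : c * a + x < c * b + y := by
  have : c * (a + 1) ≤ c * b := Nat.mul_le_mul_left _ hab
  rw [mul_add] at this
  omega

theorem rp_injOn (h : DoubleTwist m p l t) {i j : ℕ} (hi : i ∈ Icc 1 (2 * m * p))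
    (hj : j ∈ Icc 1 (2 * m * p)) (hij : rpT l t i = rpT l t j) : i = j := by
  obtain ⟨v, hv, w, hw, hi⟩ := exists_of_mem h.hm hi
  obtain ⟨v', hv', w', hw', hj⟩ := exists_of_mem h.hm hj
  have key : ∀ x x', x < 2 * p → x' < 2 * p → 2 * p * w + x = 2 * p * w' + x' → w = w' := by
    intro x x' hx hx' he
    rcases Nat.lt_trichotomy w w' with hlt | heq | hlt
    · have := base_lt (y := x') hlt hx; omega
    · exact heq
    · have := base_lt (y := x) hlt hx'; omega
  rcases hi with rfl | rfl <;> rcases hj with rfl | rfl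
  · rw [h.rp_lower hv hw, h.rp_lower hv' hw'] at hij
    obtain rfl := key (p + v) (p + v') (by omega) (by omega) (by omega)
    obtain rfl : v = v' := by omega
    rfl
  · rw [h.rp_lower hv hw, h.rp_upper hv' hw'] at hij
    obtain rfl := key (p + v) (p - v' - 1) (by omega) (by omega) (by omega)
    omega
  · rw [h.rp_upper hv hw, h.rp_lower hv' hw'] at hij
    obtain rfl := key (p - v - 1) (p + v') (by omega) (by omega) (by omega)
    omega
  · rw [h.rp_upper hv hw, h.rp_upper hv' hw'] at hij
    obtain rfl := key (p - v - 1) (p - v' - 1) (by omega) (by omega) (by omega)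
    obtain rfl : v = v' := by omega
    rfl

theorem iT_rp (h : DoubleTwist m p l t) {j : ℕ} (hj : j ∈ Icc 1 (2 * m * p)) :
    iT l t (rpT l t j) = j := by
  have hex : ∃ i, i ∈ Icc 1 ((l - 1) / 2) ∧ rpT l t i = rpT l t j :=
    ⟨j, by rwa [h.half_sub_one], rfl⟩
  rw [iT, dif_pos hex]
  have hs := hex.choose_spec
  exact h.rp_injOn (h.half_sub_one ▸ hs.1) hj hs.2

theorem i_lower (h : DoubleTwist m p l t) {v w : ℕ} (hv : v < p) (hw : w < m) :
    iT l t (2 * p * w + p + v + 1) = 2 * m * v + m - w := by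
  rw [← h.rp_lower hv hw, h.iT_rp (lower_mem hv hw)]

theorem i_upper (h : DoubleTwist m p l t) {v w : ℕ} (hv : v < p) (hw : w < m) :
    iT l t (2 * p * w + p - v) = 2 * m * v + m + w + 1 := by
  rw [← h.rp_upper hv hw, h.iT_rp (upper_mem hv hw)]

end DoubleTwist

/-- Split `{1, …, 2mp}` into `p` blocks of length `2m`, each centred at its middle. -/
theorem sum_Icc_blocks {M : Type*} [AddCommMonoid M] (m p : ℕ) (F : ℕ → M) :
    ∑ j ∈ Icc 1 (2 * m * p), F j =
      ∑ v ∈ range p, ∑ w ∈ range m, (F (2 * m * v + m - w) + F (2 * m * v + m + w + 1)) := by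
  have hIcc : ∀ K, ∑ j ∈ Icc 1 K, F j = ∑ j ∈ range K, F (j + 1) := by
    intro K
    induction K with
    | zero => simp
    | succ K ih => rw [sum_Icc_succ_top (by omega), ih, sum_range_succ]
  rw [hIcc]
  induction p with
  | zero => simp
  | succ p ih =>
    rw [mul_add, mul_one, Finset.sum_range_add, ih, sum_range_succ]
    congr 1
    rw [two_mul m, Finset.sum_range_add, sum_add_distrib, ← sum_range_reflect]
    congr 1
    · refine sum_congr rfl fun w hw => congrArg F ?_
      rw [mem_range] at hw
      omega
    · exact sum_congr rfl fun w hw => congrArg F (by omega)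

theorem prod_Icc_blocks {M : Type*} [CommMonoid M] (m p : ℕ) (F : ℕ → M) :
    ∏ j ∈ Icc 1 (2 * m * p), F j =
      ∏ v ∈ range p, ∏ w ∈ range m, (F (2 * m * v + m - w) * F (2 * m * v + m + w + 1)) :=
  sum_Icc_blocks (M := Additive M) m p F

theorem sum_Icc_shift {M : Type*} [AddCommMonoid M] {F : ℕ → M} (hF : F 0 = 0) (K : ℕ) :
    ∑ j ∈ Icc 1 (K - 1), F j = ∑ j ∈ Icc 1 K, F (j - 1) := by
  induction K with
  | zero => simp
  | succ K ih =>
    rw [sum_Icc_succ_top (by omega), ← ih]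
    rcases K with _ | K
    · simp [hF]
    · simp only [Nat.add_sub_cancel]
      rw [sum_Icc_succ_top (by omega)]

theorem sum_Icc_restrict {M : Type*} [AddCommMonoid M] (F : ℕ → M) {a b K : ℕ} (ha : 1 ≤ a)
    (hb : b ≤ K) :
    ∑ k ∈ Icc a b, F k = ∑ k ∈ Icc 1 K, if a ≤ k ∧ k ≤ b then F k else 0 := by
  rw [← sum_filter]
  refine sum_congr ?_ fun _ _ => rfl
  ext k
  simp only [mem_filter, mem_Icc]
  omega

theorem sum_Icc_split {M : Type*} [AddCommGroup M] (F : ℕ → M) {a K : ℕ} (ha : a ≤ K) :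
    ∑ k ∈ Icc (a + 1) K, F k = ∑ k ∈ Icc 1 K, F k - ∑ k ∈ Icc 1 a, F k := by
  induction K, ha using Nat.le_induction with
  | base => simp
  | succ K hK ih => rw [sum_Icc_succ_top (by omega), sum_Icc_succ_top (by omega), ih]; abel

theorem sum_Icc_reflect {M : Type*} [AddCommMonoid M] (F : ℕ → M) (p : ℕ) :
    ∑ k ∈ Icc 1 p, F k = ∑ v ∈ range p, F (p - v) := by
  rw [← sum_range_reflect]
  induction p with
  | zero => simp
  | succ p ih =>
    rw [sum_Icc_succ_top (by omega), ih, sum_range_succ]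
    congr 1
    · refine sum_congr rfl fun x hx => congrArg F ?_
      rw [mem_range] at hx
      omega
    · exact congrArg F (by omega)

namespace DoubleTwist

variable {m p l t : ℕ}

theorem sum_Icc_rows {M : Type*} [AddCommMonoid M] (m p : ℕ) (F : ℕ → M) :
    ∑ k ∈ Icc 1 (2 * m * p), F k =
      ∑ v ∈ range p, ∑ w ∈ range m, (F (2 * p * w + p - v) + F (2 * p * w + p + v + 1)) := by
  rw [show 2 * m * p = 2 * p * m by ring, sum_Icc_blocks, sum_comm]

theorem i_first (h : DoubleTwist m p l t) {v : ℕ} (hv : v < p) :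
    iT l t (p - v) = 2 * m * v + m + 1 := by
  simpa using h.i_upper hv h.hm

theorem sigma_first (h : DoubleTwist m p l t) {v : ℕ} (hv : v < p) :
    sigmaT l t (2 * m * v + m + 1) = -1 := by
  simpa using h.sigma_upper hv h.hm

theorem p_le (h : DoubleTwist m p l t) : p + p ≤ 2 * m * p := by
  have := Nat.mul_le_mul_right p (Nat.mul_le_mul_left 2 h.hm)
  rw [Nat.succ_eq_add_one, zero_add] at this
  omega

theorem sum_middle (h : DoubleTwist m p l t) (F : ℕ → ℤ) :
    ∑ k ∈ Icc (p + 1) (2 * m * p - p), F k =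
      ∑ k ∈ Icc 1 (2 * m * p), F k - ∑ k ∈ Icc 1 p, F k
        - ∑ v ∈ range p, F (2 * p * (m - 1) + p + v + 1) := by
  have hp := h.p_le
  rw [sum_Icc_split F (by omega : p ≤ 2 * m * p - p)]
  have e : 2 * m * p = 2 * p * (m - 1) + p + p := by
    obtain ⟨u, rfl⟩ := Nat.exists_eq_add_of_lt h.hm
    rw [show 0 + u + 1 - 1 = u by omega]; ring
  rw [e, Nat.add_sub_cancel]
  generalize 2 * p * (m - 1) + p = c
  have : ∀ d, ∑ k ∈ Icc 1 (c + d), F k = ∑ k ∈ Icc 1 c, F k + ∑ v ∈ range d, F (c + v + 1) := by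
    intro d
    induction d with
    | zero => simp
    | succ d ih => rw [← add_assoc, sum_Icc_succ_top (by omega), ih, sum_range_succ, add_assoc]
  rw [this p]
  ring

theorem sigma_add_reflect (h : DoubleTwist m p l t) {k : ℕ} (hk : k ∈ Icc 1 (2 * m * p)) :
    sigmaT l t (iT l t k) + sigmaT l t (iT l t (2 * m * p + 1 - k)) = 0 := by
  rw [show 2 * m * p = 2 * p * m by ring] at hk
  obtain ⟨w, hw, v, hv, hk⟩ := exists_of_mem h.hp hk
  have e : 2 * m * p = 2 * p * w + 2 * p * (m - 1 - w) + 2 * p := by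
    obtain ⟨u, hu⟩ := Nat.exists_eq_add_of_lt hw
    rw [show m - 1 - w = u by omega, hu]; ring
  rcases hk with rfl | rfl
  · rw [show 2 * m * p + 1 - (2 * p * w + p - v) = 2 * p * (m - 1 - w) + p + v + 1 by omega,
      h.i_upper hv hw, h.i_lower hv (by omega), h.sigma_upper hv hw, h.sigma_lower hv (by omega)]
    rfl
  · rw [show 2 * m * p + 1 - (2 * p * w + p + v + 1) = 2 * p * (m - 1 - w) + p - v by omega,
      h.i_lower hv hw, h.i_upper hv (by omega), h.sigma_lower hv hw, h.sigma_upper hv (by omega)]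
    rfl

theorem sum_sigma (h : DoubleTwist m p l t) : ∑ j ∈ Icc 1 (2 * m * p), sigmaT l t j = 0 := by
  rw [sum_Icc_blocks]
  refine sum_eq_zero fun v hv => sum_eq_zero fun w hw => ?_
  rw [mem_range] at hv hw
  rw [h.sigma_lower hv hw, h.sigma_upper hv hw]
  rfl

/-- The sign of the last entry of a block, i.e. of a positive multiple of `2m`. -/
theorem sigma_mul (h : DoubleTwist m p l t) {v : ℕ} (hv0 : 0 < v) (hv : v ≤ p) :
    sigmaT l t (2 * m * v) = -1 := by
  have hm := h.hm
  obtain ⟨c, rfl⟩ := Nat.exists_eq_add_of_lt hv0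
  rw [show 2 * m * (0 + c + 1) = 2 * m * c + m + (m - 1) + 1 by rw [zero_add, mul_add]; omega,
    h.sigma_upper (by omega) (by omega)]

/-- A linear form supported on multiples of `m`. -/
theorem sum_coeff_eq (h : DoubleTwist m p l t) {n : ℕ → ℕ} (h0 : n 0 = 0) (c : ℕ → ℤ)
    (hlow : ∀ v < p, ∀ w, w + 1 < m → c (2 * m * v + m - (w + 1)) = 0)
    (hlast : ∀ v < p, 0 < v → c (2 * m * v) = 1)
    (hmid : ∀ v < p, c (2 * m * v + m) = -1)
    (hup : ∀ v < p, ∀ w, w + 1 < m → c (2 * m * v + m + (w + 1)) = 0) :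
    ∑ j ∈ Icc 1 (2 * m * p - 1), c j * (n j : ℤ) =
      ∑ v ∈ range p, ((n (2 * m * v) : ℤ) - n (2 * m * v + m)) := by
  rw [sum_Icc_shift (by simp [h0]), sum_Icc_blocks]
  refine sum_congr rfl fun v hv => ?_
  rw [mem_range] at hv
  obtain ⟨u, hu⟩ := Nat.exists_eq_add_of_lt h.hm
  rw [zero_add] at hu
  rw [sum_add_distrib, hu, sum_range_succ, sum_range_succ', ← hu]
  rw [sum_eq_zero, sum_eq_zero]
  · have : c (2 * m * v) * (n (2 * m * v) : ℤ) = n (2 * m * v) := by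
      rcases Nat.eq_zero_or_pos v with rfl | h1
      · simp [h0]
      · rw [hlast v hv h1, one_mul]
    rw [show 2 * m * v + m - u - 1 = 2 * m * v by omega,
      show 2 * m * v + m + 0 + 1 - 1 = 2 * m * v + m by omega, this, hmid v hv]
    ring
  · intro w hw
    rw [mem_range] at hw
    rw [show 2 * m * v + m + (w + 1) + 1 - 1 = 2 * m * v + m + (w + 1) by omega,
      hup v hv w (by omega), zero_mul]
  · intro w hw
    rw [mem_range] at hw
    rw [show 2 * m * v + m - w - 1 = 2 * m * v + m - (w + 1) by omega,
      hlow v hv w (by omega), zero_mul]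

theorem sigma_last (h : DoubleTwist m p l t) : sigmaT l t (2 * m * p) = -1 :=
  h.sigma_mul h.hp le_rfl

theorem aT_eq (h : DoubleTwist m p l t) {n : ℕ → ℕ} (h0 : n 0 = 0) :
    aT l t n = ∑ v ∈ range p, ((n (2 * m * v + m) : ℤ) - n (2 * m * v)) := by
  have hm := h.hm
  have hfirst : ∑ j ∈ Icc 1 (2 * m * p), (∑ k ∈ Icc (rpT l t j) (2 * m * p),
      (sigmaT l t (iT l t k) + sigmaT l t (iT l t (2 * m * p + 1 - k))) / 2) *
      ((n j : ℤ) - (n (j - 1) : ℤ)) = 0 := by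
    refine sum_eq_zero fun j hj => ?_
    rw [sum_eq_zero, zero_mul]
    intro k hk
    have hr : 1 ≤ rpT l t j := by
      obtain ⟨v, hv, w, hw, rfl | rfl⟩ := exists_of_mem h.hm hj
      · rw [h.rp_lower hv hw]; omega
      · rw [h.rp_upper hv hw]; omega
    rw [mem_Icc] at hk
    rw [h.sigma_add_reflect (mem_Icc.2 ⟨by omega, hk.2⟩)]
    rfl
  have hsucc : ∀ v < p, 2 * m * p = 2 * m * v + 2 * m * (p - 1 - v) + 2 * m := by
    intro v hv
    rw [← mul_add, ← Nat.mul_succ]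
    congr 1
    omega
  rw [aT, h.half_sub_one, hfirst, h.sigma_last, h.sum_sigma,
    h.sum_coeff_eq h0 (fun j => (sigmaT l t (j + 1) + sigmaT l t (2 * m * p + 1 - j)) / 2)]
  · rw [← neg_inj, ← sum_neg_distrib]
    simp
  · intro v hv w hw
    have e := hsucc v hv
    rw [show 2 * m * v + m - (w + 1) + 1 = 2 * m * v + m - w by omega,
      show 2 * m * p + 1 - (2 * m * v + m - (w + 1)) = 2 * m * (p - 1 - v) + m + (w + 1) + 1 by
        omega, h.sigma_lower hv (by omega), h.sigma_upper (by omega) hw]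
    rfl
  · intro v hv hv0
    have e := hsucc (v - 1) (by omega)
    have e' := hsucc v hv
    rw [show p - 1 - (v - 1) = p - 1 - v + 1 by omega] at e
    rw [show 2 * m * v + 1 = 2 * m * v + m - (m - 1) by omega,
      show 2 * m * p + 1 - 2 * m * v = 2 * m * (p - 1 - v + 1) + m - (m - 1) by
        rw [mul_add]; omega, h.sigma_lower hv (by omega), h.sigma_lower (by omega) (by omega)]
    rfl
  · intro v hv
    have e := hsucc v hv
    rw [show 2 * m * p + 1 - (2 * m * v + m) = 2 * m * (p - 1 - v) + m + 1 by omega,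
      h.sigma_first hv, h.sigma_first (by omega)]
    rfl
  · intro v hv w hw
    have e := hsucc v hv
    rw [show 2 * m * p + 1 - (2 * m * v + m + (w + 1)) = 2 * m * (p - 1 - v) + m - w by
        omega, h.sigma_upper hv hw, h.sigma_lower (by omega) (by omega)]
    rfl

theorem sum_sigma_diff (h : DoubleTwist m p l t) {n : ℕ → ℕ} (h0 : n 0 = 0) :
    ∑ j ∈ Icc 1 (2 * m * p - 1), ((sigmaT l t (j + 1) - sigmaT l t j) / 2) * (n j : ℤ) =
      ∑ v ∈ range p, ((n (2 * m * v) : ℤ) - n (2 * m * v + m)) := by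
  have hm := h.hm
  rw [h.sum_coeff_eq h0 (fun j => (sigmaT l t (j + 1) - sigmaT l t j) / 2)]
  · intro v hv w hw
    rw [show 2 * m * v + m - (w + 1) + 1 = 2 * m * v + m - w by omega,
      h.sigma_lower hv hw, h.sigma_lower hv (by omega)]
    rfl
  · intro v hv hv0
    rw [show 2 * m * v + 1 = 2 * m * v + m - (m - 1) by omega, h.sigma_mul hv0 hv.le,
      h.sigma_lower hv (by omega)]
    rfl
  · intro v hv
    rw [h.sigma_first hv, show 2 * m * v + m = 2 * m * v + m - 0 by omega, h.sigma_lower hv hm]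
    rfl
  · intro v hv w hw
    rw [h.sigma_upper hv hw, ← add_assoc, h.sigma_upper hv (by omega)]
    rfl

end DoubleTwist

theorem sum_telescope_lt (f : ℕ → ℤ) {c m : ℕ} (hc : c ≤ m) :
    ∑ w ∈ range m, (if w < c then f (w + 1) - f w else 0) = f c - f 0 := by
  rw [← sum_filter, show (range m).filter (· < c) = range c by ext; simp; omega, sum_range_sub]

namespace DoubleTwist

variable {m p l t : ℕ}

theorem lower_lt_upper_iff {v v' w w' : ℕ} (hw : w < m) (hw' : w' < m) :
    2 * m * v + m - w < 2 * m * v' + m + w' + 1 ↔ v ≤ v' := by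
  constructor
  · intro hlt
    by_contra! hv
    have := base_lt (c := 2 * m) (x := m + w') (y := m - w - 1) hv (by omega)
    omega
  · intro hv
    have := Nat.mul_le_mul_left (2 * m) hv
    omega

theorem upper_lt_lower_iff {v v' w w' : ℕ} (hw : w < m) (hw' : w' < m) :
    2 * m * v + m + w + 1 < 2 * m * v' + m - w' ↔ v < v' := by
  rcases Nat.lt_trichotomy v v' with hv | rfl | hv
  · have := base_lt (c := 2 * m) (x := m + w) (y := m - w' - 1) hv (by omega)
    omega
  · omega
  · have := base_lt (c := 2 * m) (x := m - w') (y := m + w + 1) hv (by omega)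
    omega

theorem lower_lt_lower_iff {v v' w w' : ℕ} (hw : w < m) (hw' : w' < m) :
    2 * m * v + m - w < 2 * m * v' + m - w' ↔ v < v' ∨ v = v' ∧ w' < w := by
  rcases Nat.lt_trichotomy v v' with hv | rfl | hv
  · have := base_lt (c := 2 * m) (x := m - w) (y := m - w') hv (by omega)
    omega
  · omega
  · have := base_lt (c := 2 * m) (x := m - w') (y := m - w) hv (by omega)
    omega

theorem upper_lt_upper_iff {v v' w w' : ℕ} (hw : w < m) (hw' : w' < m) :
    2 * m * v + m + w + 1 < 2 * m * v' + m + w' + 1 ↔ v < v' ∨ v = v' ∧ w < w' := by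
  rcases Nat.lt_trichotomy v v' with hv | rfl | hv
  · have := base_lt (c := 2 * m) (x := m + w) (y := m + w') hv (by omega)
    omega
  · omega
  · have := base_lt (c := 2 * m) (x := m + w') (y := m + w) hv (by omega)
    omega

theorem sum_first (h : DoubleTwist m p l t) (n : ℕ → ℕ) :
    ∑ k ∈ Icc 1 p, ((1 - sigmaT l t (iT l t k)) / 2) * (n (iT l t k - 1) : ℤ) =
      ∑ v ∈ range p, (n (2 * m * v + m) : ℤ) := by
  rw [sum_Icc_reflect]
  refine sum_congr rfl fun v hv => ?_
  rw [mem_range] at hv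
  rw [h.i_first hv, h.sigma_first hv]
  simp

theorem sum_pred (h : DoubleTwist m p l t) (n : ℕ → ℕ) :
    ∑ k ∈ Icc (p + 1) (2 * m * p), (n (iT l t k - 1) : ℤ) =
      ∑ v ∈ range p, (∑ w ∈ range m, ((n (2 * m * v + m + w) : ℤ) + n (2 * m * v + m - (w + 1)))
        - n (2 * m * v + m)) := by
  have := h.p_le
  rw [sum_Icc_split _ (by omega), sum_Icc_rows, sum_Icc_reflect, ← sum_sub_distrib]
  refine sum_congr rfl fun v hv => ?_
  rw [mem_range] at hv
  rw [h.i_first hv]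
  congr 1
  refine sum_congr rfl fun w hw => ?_
  rw [mem_range] at hw
  rw [h.i_lower hv hw, h.i_upper hv hw]
  rfl

theorem sum_pos (h : DoubleTwist m p l t) (n : ℕ → ℕ) :
    ∑ k ∈ Icc (p + 1) (2 * m * p), ((1 + sigmaT l t (iT l t k)) / 2) * (n (iT l t k) : ℤ) =
      ∑ v ∈ range p, ∑ w ∈ range m, (n (2 * m * v + m - w) : ℤ) := by
  have := h.p_le
  rw [sum_Icc_split _ (by omega), sum_Icc_rows, sum_Icc_reflect, ← sum_sub_distrib]
  refine sum_congr rfl fun v hv => ?_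
  rw [mem_range] at hv
  rw [h.i_first hv, h.sigma_first hv, add_neg_cancel, Int.zero_ediv, zero_mul, sub_zero]
  refine sum_congr rfl fun w hw => ?_
  rw [mem_range] at hw
  rw [h.i_lower hv hw, h.i_upper hv hw, h.sigma_lower hv hw, h.sigma_upper hv hw]
  simp

theorem b2T_eq (h : DoubleTwist m p l t) (n : ℕ → ℕ) :
    b2T l t n = ∑ v ∈ range p,
      (∑ w ∈ range m, (n (2 * m * v + m - (w + 1)) : ℤ) - n (2 * m * v)) := by
  have hm := h.hm
  rw [b2T, if_pos h.lt_two_mul, h.half_sub, h.half_t, h.sum_middle, sum_Icc_rows, sum_Icc_reflect,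
    ← sum_sub_distrib, ← sum_sub_distrib]
  refine sum_congr rfl fun v hv => ?_
  rw [mem_range] at hv
  rw [h.i_first hv, h.sigma_first hv, add_neg_cancel, Int.zero_ediv, zero_mul, sub_zero,
    h.i_lower hv (by omega : m - 1 < m), h.sigma_lower hv (by omega),
    show 2 * m * v + m - (m - 1) - 1 = 2 * m * v by omega, show ((1 : ℤ) + 1) / 2 = 1 from rfl,
    one_mul]
  congr 1
  refine sum_congr rfl fun w hw => ?_
  rw [mem_range] at hw
  rw [h.i_lower hv hw, h.i_upper hv hw, h.sigma_lower hv hw, h.sigma_upper hv hw]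
  simp [Nat.sub_sub]

theorem sum_upto_lower (h : DoubleTwist m p l t) (n : ℕ → ℕ) {v w : ℕ} (hv : v < p)
    (hw : w < m) :
    ∑ k ∈ Icc 1 (rpT l t (2 * m * v + m - w)), ((n (iT l t k) : ℤ) - n (iT l t k - 1)) =
      ∑ v' ∈ range p, ((n (2 * m * v' + m + (w + 1)) : ℤ)
        - n (2 * m * v' + m - if v' ≤ v then w + 1 else w)) := by
  have hle : 2 * p * w + p + v + 1 ≤ 2 * m * p := by
    have := (mem_Icc.1 (upper_mem (m := p) hw hv)).2
    rwa [mul_right_comm 2 p m] at this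
  rw [h.rp_lower hv hw, sum_Icc_restrict _ le_rfl hle, sum_Icc_rows]
  refine sum_congr rfl fun v' hv' => ?_
  rw [mem_range] at hv'
  have hup := sum_telescope_lt (fun w => (n (2 * m * v' + m + w) : ℤ)) (c := w + 1) hw
  have hlo := sum_telescope_lt (fun w => (n (2 * m * v' + m - w) : ℤ))
    (c := if v' ≤ v then w + 1 else w) (m := m) (by split_ifs <;> omega)
  simp only [add_zero, Nat.sub_zero] at hup hlo
  rw [← sub_sub_sub_cancel_right _ _ (n (2 * m * v' + m) : ℤ), ← hup, ← hlo, ← sum_sub_distrib]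
  refine sum_congr rfl fun w' hw' => ?_
  rw [mem_range] at hw'
  have h1 := lower_lt_upper_iff (m := p) (v := w') (v' := w) hv' hv
  have h2 := upper_lt_upper_iff (m := p) (v := w) (v' := w') hv hv'
  have h3 := upper_lt_lower_iff (m := p) (v := w) (v' := w') hv hv'
  have c1 : (1 ≤ 2 * p * w' + p - v' ∧ 2 * p * w' + p - v' ≤ 2 * p * w + p + v + 1) ↔
      w' < w + 1 := by omega
  have c2 : (1 ≤ 2 * p * w' + p + v' + 1 ∧ 2 * p * w' + p + v' + 1 ≤ 2 * p * w + p + v + 1) ↔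
      w' < if v' ≤ v then w + 1 else w := by split_ifs <;> omega
  rw [h.i_lower hv' hw', h.i_upper hv' hw', Nat.add_sub_cancel, Nat.sub_sub, ← add_assoc]
  simp only [c1, c2]
  split_ifs <;> ring

theorem sum_upto_upper (h : DoubleTwist m p l t) (n : ℕ → ℕ) {v w : ℕ} (hv : v < p)
    (hw : w < m) :
    ∑ k ∈ Icc 1 (rpT l t (2 * m * v + m + w + 1)), ((n (iT l t k) : ℤ) - n (iT l t k - 1)) =
      ∑ v' ∈ range p, ((n (2 * m * v' + m + if v ≤ v' then w + 1 else w) : ℤ)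
        - n (2 * m * v' + m - w)) := by
  have hle : 2 * p * w + p - v ≤ 2 * m * p := by
    have := (mem_Icc.1 (lower_mem (m := p) hw hv)).2
    rwa [mul_right_comm 2 p m] at this
  rw [h.rp_upper hv hw, sum_Icc_restrict _ le_rfl hle, sum_Icc_rows]
  refine sum_congr rfl fun v' hv' => ?_
  rw [mem_range] at hv'
  have hup := sum_telescope_lt (fun w => (n (2 * m * v' + m + w) : ℤ))
    (c := if v ≤ v' then w + 1 else w) (m := m) (by split_ifs <;> omega)
  have hlo := sum_telescope_lt (fun w => (n (2 * m * v' + m - w) : ℤ)) (c := w) hw.le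
  simp only [add_zero, Nat.sub_zero] at hup hlo
  rw [← sub_sub_sub_cancel_right _ _ (n (2 * m * v' + m) : ℤ), ← hup, ← hlo, ← sum_sub_distrib]
  refine sum_congr rfl fun w' hw' => ?_
  rw [mem_range] at hw'
  have h1 := lower_lt_lower_iff (m := p) (v := w) (v' := w') hv hv'
  have h2 := upper_lt_lower_iff (m := p) (v := w') (v' := w) hv' hv
  have h3 := lower_lt_upper_iff (m := p) (v := w) (v' := w') hv hv'
  have c1 : (1 ≤ 2 * p * w' + p - v' ∧ 2 * p * w' + p - v' ≤ 2 * p * w + p - v) ↔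
      w' < if v ≤ v' then w + 1 else w := by split_ifs <;> omega
  have c2 : (1 ≤ 2 * p * w' + p + v' + 1 ∧ 2 * p * w' + p + v' + 1 ≤ 2 * p * w + p - v) ↔
      w' < w := by omega
  rw [h.i_lower hv' hw', h.i_upper hv' hw', Nat.add_sub_cancel, Nat.sub_sub, ← add_assoc]
  simp only [c1, c2]
  split_ifs <;> ring

theorem sum_sigma_upto (h : DoubleTwist m p l t) (n : ℕ → ℕ) :
    ∑ j ∈ Icc 1 (2 * m * p), sigmaT l t j *
      (∑ k ∈ Icc 1 (rpT l t j), ((n (iT l t k) : ℤ) - (n (iT l t k - 1) : ℤ))) * (n (j - 1) : ℤ) =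
    ∑ v ∈ range p, ∑ v' ∈ range p, ∑ w ∈ range m,
      (((n (2 * m * v' + m + (w + 1)) : ℤ) - n (2 * m * v' + m - if v' ≤ v then w + 1 else w))
          * n (2 * m * v + m - (w + 1))
        - ((n (2 * m * v' + m + if v ≤ v' then w + 1 else w) : ℤ) - n (2 * m * v' + m - w))
          * n (2 * m * v + m + w)) := by
  rw [sum_Icc_blocks]
  refine sum_congr rfl fun v hv => ?_
  rw [mem_range] at hv
  rw [sum_comm]
  refine sum_congr rfl fun w hw => ?_
  rw [mem_range] at hw
  rw [h.sum_upto_lower n hv hw, h.sum_upto_upper n hv hw, h.sigma_lower hv hw,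
    h.sigma_upper hv hw, Nat.add_sub_cancel, Nat.sub_sub]
  conv_rhs => rw [sum_sub_distrib, ← sum_mul, ← sum_mul]
  ring

/-- The summand of the sum over inversions, for an index of negative sign first. -/
theorem inversion_upper_lower (h : DoubleTwist m p l t) (x y : ℤ) {v v' w w' : ℕ} (hv : v < p)
    (hw : w < m) (hv' : v' < p) (hw' : w' < m) :
    (if 2 * p * w + p - v + 1 ≤ 2 * p * w' + p + v' + 1 ∧
        2 * p * w' + p + v' + 1 ≤ 2 * m * p then
      ((1 + Int.sign (((2 * m * v + m + w + 1 : ℕ) : ℤ) - ((2 * m * v' + m - w' : ℕ) : ℤ))) / 2) *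
        ((sigmaT l t (2 * m * v + m + w + 1) - sigmaT l t (2 * m * v' + m - w')) / 2) * x * y
      else 0) = if w ≤ w' ∧ v' ≤ v then -(x * y) else 0 := by
  have hle := (mem_Icc.1 (upper_mem (m := p) hw' hv')).2
  rw [mul_right_comm 2 p m] at hle
  have h1 := lower_lt_upper_iff (m := p) (v := w) (v' := w') hv hv'
  have h2 := lower_lt_upper_iff (m := m) (v := v') (v' := v) hw' hw
  have h3 := upper_lt_lower_iff (m := m) (v := v) (v' := v') hw hw'
  rw [h.sigma_upper hv hw, h.sigma_lower hv' hw']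
  by_cases hww : w ≤ w'
  · rw [if_pos (by omega)]
    by_cases hvv : v' ≤ v
    · rw [Int.sign_eq_one_of_pos (by omega), if_pos ⟨hww, hvv⟩,
        show ((1 : ℤ) + 1) / 2 = 1 from rfl, show ((-1 : ℤ) - 1) / 2 = -1 from rfl]
      ring
    · rw [Int.sign_eq_neg_one_of_neg (by omega), if_neg (by omega)]
      simp
  · rw [if_neg (by omega), if_neg (by omega)]

/-- The summand of the sum over inversions, for an index of positive sign first. -/
theorem inversion_lower_upper (h : DoubleTwist m p l t) (x y : ℤ) {v v' w w' : ℕ} (hv : v < p)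
    (hw : w < m) (hv' : v' < p) (hw' : w' < m) :
    (if 2 * p * w + p + v + 1 + 1 ≤ 2 * p * w' + p - v' ∧ 2 * p * w' + p - v' ≤ 2 * m * p then
      ((1 + Int.sign (((2 * m * v + m - w : ℕ) : ℤ) - ((2 * m * v' + m + w' + 1 : ℕ) : ℤ))) / 2) *
        ((sigmaT l t (2 * m * v + m - w) - sigmaT l t (2 * m * v' + m + w' + 1)) / 2) * x * y
      else 0) = if w < w' ∧ v' < v then x * y else 0 := by
  have hle := (mem_Icc.1 (lower_mem (m := p) hw' hv')).2
  rw [mul_right_comm 2 p m] at hle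
  have h1 := upper_lt_lower_iff (m := p) (v := w) (v' := w') hv hv'
  have h2 := upper_lt_lower_iff (m := m) (v := v') (v' := v) hw' hw
  have h3 := lower_lt_upper_iff (m := m) (v := v) (v' := v') hw hw'
  rw [h.sigma_upper hv' hw', h.sigma_lower hv hw]
  by_cases hww : w < w'
  · rw [if_pos (by omega)]
    by_cases hvv : v' < v
    · rw [Int.sign_eq_one_of_pos (by omega), if_pos ⟨hww, hvv⟩,
        show ((1 : ℤ) + 1) / 2 = 1 from rfl, show ((1 : ℤ) - -1) / 2 = 1 from rfl]
      ring
    · rw [Int.sign_eq_neg_one_of_neg (by omega), if_neg (by omega)]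
      simp
  · rw [if_neg (by omega), if_neg (by omega)]

theorem sum_inversions (h : DoubleTwist m p l t) (n : ℕ → ℕ) :
    ∑ k ∈ Icc 1 (2 * m * p - 1), ∑ k' ∈ Icc (k + 1) (2 * m * p),
      ((1 + Int.sign ((iT l t k : ℤ) - (iT l t k' : ℤ))) / 2) *
        ((sigmaT l t (iT l t k) - sigmaT l t (iT l t k')) / 2) *
        ((n (iT l t k) : ℤ) - (n (iT l t k - 1) : ℤ)) *
        ((n (iT l t k') : ℤ) - (n (iT l t k' - 1) : ℤ)) =
    ∑ v ∈ range p, ∑ v' ∈ range p, ∑ w ∈ range m,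
      ((if v' < v then ((n (2 * m * v + m - w) : ℤ) - n (2 * m * v + m - (w + 1))) *
          (n (2 * m * v' + m + m) - n (2 * m * v' + m + (w + 1))) else 0)
        - (if v' ≤ v then ((n (2 * m * v + m + (w + 1)) : ℤ) - n (2 * m * v + m + w)) *
          (n (2 * m * v' + m - w) - n (2 * m * v' + m - m)) else 0)) := by
  have hP : 2 * m * p - 1 + 1 = 2 * m * p := by
    have := h.p_le
    have := h.hp
    omega
  have hext : ∀ f : ℕ → ℕ → ℤ, ∑ k ∈ Icc 1 (2 * m * p - 1), ∑ k' ∈ Icc (k + 1) (2 * m * p), f k k' =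
      ∑ k ∈ Icc 1 (2 * m * p), ∑ k' ∈ Icc 1 (2 * m * p),
        if k + 1 ≤ k' ∧ k' ≤ 2 * m * p then f k k' else 0 := by
    intro f
    simp_rw [← sum_Icc_restrict _ (Nat.le_add_left 1 _) (le_refl (2 * m * p))]
    conv_rhs => rw [← hP, sum_Icc_succ_top (by omega), hP]
    simp
  rw [hext, sum_Icc_rows]
  refine sum_congr rfl fun v hv => ?_
  rw [mem_range] at hv
  rw [sum_comm]
  refine sum_congr rfl fun w hw => ?_
  rw [mem_range] at hw
  rw [sum_Icc_rows, sum_Icc_rows, ← sum_add_distrib]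
  refine sum_congr rfl fun v' hv' => ?_
  rw [mem_range] at hv'
  have hup := sum_range_sub (fun w => (n (2 * m * v' + m + w) : ℤ)) m
  have hup' := sum_telescope_lt (fun w => (n (2 * m * v' + m + w) : ℤ)) (c := w + 1) hw
  have hlo := sum_range_sub (fun w => (n (2 * m * v' + m - w) : ℤ)) m
  have hlo' := sum_telescope_lt (fun w => (n (2 * m * v' + m - w) : ℤ)) (c := w) hw.le
  rw [show (n (2 * m * v' + m + m) : ℤ) - n (2 * m * v' + m + (w + 1)) = _ from
    (sub_sub_sub_cancel_right _ _ _).symm.trans (congrArg₂ _ hup.symm hup'.symm),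
    show (n (2 * m * v' + m - w) : ℤ) - n (2 * m * v' + m - m) = _ from
    (sub_sub_sub_cancel_right _ _ _).symm.trans (congrArg₂ _ hlo'.symm hlo.symm),
    ← sum_sub_distrib, ← sum_sub_distrib, mul_sum, mul_sum, ← sum_add_distrib]
  have hite : ∀ (c : Prop) [Decidable c] (f : ℕ → ℤ),
      (if c then ∑ x ∈ range m, f x else 0) = ∑ x ∈ range m, if c then f x else 0 := by
    intro c _ f
    split_ifs <;> simp
  rw [hite, hite, ← sum_sub_distrib]
  refine sum_congr rfl fun w' hw' => ?_
  rw [mem_range] at hw'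
  rw [h.i_upper hv hw, h.i_upper hv' hw', h.i_lower hv hw, h.i_lower hv' hw',
    h.inversion_upper_lower _ _ hv hw hv' hw', h.inversion_lower_upper _ _ hv hw hv' hw',
    h.sigma_upper hv hw, h.sigma_upper hv' hw', h.sigma_lower hv hw, h.sigma_lower hv' hw']
  simp only [sub_self, Int.zero_ediv, mul_zero, zero_mul, ite_self, zero_add, add_zero,
    Nat.add_sub_cancel, Nat.sub_sub, ← add_assoc]
  split_ifs <;> first | omega | ring

end DoubleTwist

theorem two_mul_dvd_iff {m : ℕ} {x : ℤ} (c y : ℤ) (hx : x = 2 * m * c + y) (h1 : -(2 * m) < y)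
    (h2 : y < 2 * m) : (2 * (m : ℤ)) ∣ x ↔ y = 0 := by
  rw [hx, Int.dvd_add_right (dvd_mul_right _ _)]
  constructor
  · exact fun hd => Int.eq_zero_of_abs_lt_dvd hd (abs_lt.2 ⟨h1, h2⟩)
  · rintro rfl
    exact dvd_zero _

/-- `Δ` in terms of the offsets of its arguments from the centres of their blocks. -/
theorem deltaLO_eq {m i j : ℕ} (ci xi cj xj : ℤ) (hi : (i : ℤ) = 2 * m * ci + m + xi)
    (hj : (j : ℤ) = 2 * m * cj + m + xj) (hxi : -m < xi ∧ xi < m) (hxi0 : xi ≠ 0)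
    (hxj : -m < xj ∧ xj ≤ m) (hij : i < j) :
    deltaLO m i j = if xi + xj = 0 ∨ xi + xj = 1 then 1
      else if xj = xi ∨ xj = xi + 1 then -1 else 0 := by
  have h0 : ¬ m ∣ i := by
    rw [← Int.natCast_dvd_natCast, hi,
      Int.dvd_add_right (dvd_add ((dvd_mul_left _ _).mul_right _) dvd_rfl)]
    exact fun hd => hxi0 (Int.eq_zero_of_abs_lt_dvd hd (abs_lt.2 hxi))
  have h1 : 2 * m ∣ i + j ↔ xi + xj = 0 := by
    rw [← Int.natCast_dvd_natCast]
    push_cast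
    exact two_mul_dvd_iff (ci + cj + 1) _ (by rw [hi, hj]; ring) (by omega) (by omega)
  have h2 : 2 * m ∣ i + j - 1 ↔ xi + xj - 1 = 0 := by
    rw [← Int.natCast_dvd_natCast, Nat.cast_sub (by omega)]
    push_cast
    exact two_mul_dvd_iff (ci + cj + 1) _ (by rw [hi, hj]; ring) (by omega) (by omega)
  have h3 : 2 * (m : ℤ) ∣ (j : ℤ) - i ↔ xj - xi = 0 :=
    two_mul_dvd_iff (cj - ci) _ (by rw [hi, hj]; ring) (by omega) (by omega)
  have h4 : 2 * (m : ℤ) ∣ (j : ℤ) - i - 1 ↔ xj - xi - 1 = 0 :=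
    two_mul_dvd_iff (cj - ci) _ (by rw [hi, hj]; ring) (by omega) (by omega)
  rw [deltaLO, if_neg h0]
  exact if_congr (by rw [h1, h2]; omega) rfl (if_congr (by rw [h3, h4]; omega) rfl rfl)

namespace DoubleTwist

variable {m p l t : ℕ}

theorem lower_cast {v w : ℕ} (hw : w < m) :
    ((2 * m * v + m - w : ℕ) : ℤ) = 2 * m * (v : ℤ) + m + -(w : ℤ) := by
  rw [Nat.cast_sub (by omega)]
  push_cast
  ring

theorem upper_cast {v w : ℕ} :
    ((2 * m * v + m + w + 1 : ℕ) : ℤ) = 2 * m * (v : ℤ) + m + ((w : ℤ) + 1) := by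
  push_cast
  ring

theorem sum_delta_lower (n : ℕ → ℕ) {v u : ℕ} (hu : u + 1 < m) :
    ∑ j ∈ Icc (2 * m * v + m - (u + 1) + 1) (2 * m * p),
      deltaLO m (2 * m * v + m - (u + 1)) j * (n (2 * m * v + m - (u + 1)) : ℤ) * (n j : ℤ) =
    ∑ v' ∈ range p, (n (2 * m * v + m - (u + 1)) : ℤ) *
      ((if v ≤ v' then (n (2 * m * v' + m + (u + 2)) : ℤ) + n (2 * m * v' + m + (u + 1))
          - n (2 * m * v' + m - u) else 0)
        - if v < v' then (n (2 * m * v' + m - (u + 1)) : ℤ) else 0) := by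
  rw [sum_Icc_restrict _ (by omega) le_rfl, sum_Icc_blocks]
  refine sum_congr rfl fun v' hv' => ?_
  rw [mem_range] at hv'
  have key : ∀ w' ∈ range m,
      ((if 2 * m * v + m - (u + 1) + 1 ≤ 2 * m * v' + m - w' ∧
            2 * m * v' + m - w' ≤ 2 * m * p then
          deltaLO m (2 * m * v + m - (u + 1)) (2 * m * v' + m - w') *
            (n (2 * m * v + m - (u + 1)) : ℤ) * (n (2 * m * v' + m - w') : ℤ) else 0) +
        if 2 * m * v + m - (u + 1) + 1 ≤ 2 * m * v' + m + w' + 1 ∧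
            2 * m * v' + m + w' + 1 ≤ 2 * m * p then
          deltaLO m (2 * m * v + m - (u + 1)) (2 * m * v' + m + w' + 1) *
            (n (2 * m * v + m - (u + 1)) : ℤ) * (n (2 * m * v' + m + w' + 1) : ℤ) else 0) =
      (n (2 * m * v + m - (u + 1)) : ℤ) *
      ((if u + 1 = w' then (if v ≤ v' then (n (2 * m * v' + m + (w' + 1)) : ℤ) else 0)
          - (if v < v' then (n (2 * m * v' + m - w') : ℤ) else 0) else 0)
        + if u = w' then (if v ≤ v' then (n (2 * m * v' + m + (w' + 1)) : ℤ)
          - n (2 * m * v' + m - w') else 0) else 0) := by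
    intro w' hw'
    rw [mem_range] at hw'
    have h1 := lower_lt_lower_iff (m := m) (v := v) (v' := v') hu hw'
    have h2 := lower_lt_upper_iff (m := m) (v := v) (v' := v') hu hw'
    have m1 := (mem_Icc.1 (lower_mem hv' hw')).2
    have m2 := (mem_Icc.1 (upper_mem hv' hw')).2
    have c1 : (2 * m * v + m - (u + 1) + 1 ≤ 2 * m * v' + m - w' ∧
            2 * m * v' + m - w' ≤ 2 * m * p) ↔ v < v' ∨ v = v' ∧ w' < u + 1 := by omega
    have c2 : (2 * m * v + m - (u + 1) + 1 ≤ 2 * m * v' + m + w' + 1 ∧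
            2 * m * v' + m + w' + 1 ≤ 2 * m * p) ↔ v ≤ v' := by omega
    have d1 : (v < v' ∨ v = v' ∧ w' < u + 1) → _ := fun hlt =>
      deltaLO_eq v (-((u + 1 : ℕ) : ℤ)) v' (-(w' : ℤ)) (lower_cast hu) (lower_cast hw')
        (by omega) (by omega) (by omega) (h1.2 hlt)
    have d2 : v ≤ v' → _ := fun hlt =>
      deltaLO_eq v (-((u + 1 : ℕ) : ℤ)) v' ((w' : ℤ) + 1) (lower_cast hu) upper_cast
        (by omega) (by omega) (by omega) (h2.2 hlt)
    simp only [c1, c2]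
    clear c1 c2 h1 h2 m1 m2
    rw [← add_assoc (2 * m * v' + m) w' 1]
    by_cases hvv : v ≤ v'
    · rw [if_pos hvv, d2 hvv]
      by_cases hlt : v < v' ∨ v = v' ∧ w' < u + 1
      · rw [if_pos hlt, d1 hlt]
        split_ifs <;> first | omega | ring
      · rw [if_neg hlt]
        split_ifs <;> first | omega | ring
    · rw [if_neg hvv, if_neg (by omega)]
      split_ifs <;> omega
  rw [sum_congr rfl key, ← mul_sum, sum_add_distrib, sum_ite_eq, sum_ite_eq,
    if_pos (mem_range.2 hu), if_pos (mem_range.2 (by omega))]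
  split_ifs <;> ring

theorem sum_delta_upper (n : ℕ → ℕ) {v u : ℕ} (hu : u + 1 < m) :
    ∑ j ∈ Icc (2 * m * v + m + u + 1 + 1) (2 * m * p),
      deltaLO m (2 * m * v + m + u + 1) j * (n (2 * m * v + m + u + 1) : ℤ) * (n j : ℤ) =
    ∑ v' ∈ range p, (n (2 * m * v + m + (u + 1)) : ℤ) *
      ((if v < v' then (n (2 * m * v' + m - u) : ℤ) + n (2 * m * v' + m - (u + 1))
          - n (2 * m * v' + m + (u + 1)) else 0)
        - if v ≤ v' then (n (2 * m * v' + m + (u + 2)) : ℤ) else 0) := by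
  have hu' : u < m := by omega
  rw [sum_Icc_restrict _ (by omega) le_rfl, sum_Icc_blocks]
  refine sum_congr rfl fun v' hv' => ?_
  rw [mem_range] at hv'
  have key : ∀ w' ∈ range m,
      ((if 2 * m * v + m + u + 1 + 1 ≤ 2 * m * v' + m - w' ∧
            2 * m * v' + m - w' ≤ 2 * m * p then
          deltaLO m (2 * m * v + m + u + 1) (2 * m * v' + m - w') *
            (n (2 * m * v + m + u + 1) : ℤ) * (n (2 * m * v' + m - w') : ℤ) else 0) +
        if 2 * m * v + m + u + 1 + 1 ≤ 2 * m * v' + m + w' + 1 ∧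
            2 * m * v' + m + w' + 1 ≤ 2 * m * p then
          deltaLO m (2 * m * v + m + u + 1) (2 * m * v' + m + w' + 1) *
            (n (2 * m * v + m + u + 1) : ℤ) * (n (2 * m * v' + m + w' + 1) : ℤ) else 0) =
      (n (2 * m * v + m + (u + 1)) : ℤ) *
      ((if u + 1 = w' then (if v < v' then (n (2 * m * v' + m - w') : ℤ) else 0)
          - (if v ≤ v' then (n (2 * m * v' + m + (w' + 1)) : ℤ) else 0) else 0)
        + if u = w' then (if v < v' then (n (2 * m * v' + m - w') : ℤ)
          - n (2 * m * v' + m + (w' + 1)) else 0) else 0) := by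
    intro w' hw'
    rw [mem_range] at hw'
    have h1 := upper_lt_lower_iff (m := m) (v := v) (v' := v') hu' hw'
    have h2 := upper_lt_upper_iff (m := m) (v := v) (v' := v') hu' hw'
    have m1 := (mem_Icc.1 (lower_mem hv' hw')).2
    have m2 := (mem_Icc.1 (upper_mem hv' hw')).2
    have c1 : (2 * m * v + m + u + 1 + 1 ≤ 2 * m * v' + m - w' ∧
            2 * m * v' + m - w' ≤ 2 * m * p) ↔ v < v' := by omega
    have c2 : (2 * m * v + m + u + 1 + 1 ≤ 2 * m * v' + m + w' + 1 ∧
            2 * m * v' + m + w' + 1 ≤ 2 * m * p) ↔ v < v' ∨ v = v' ∧ u < w' := by omega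
    have d1 : v < v' → _ := fun hlt =>
      deltaLO_eq v ((u : ℤ) + 1) v' (-(w' : ℤ)) upper_cast (lower_cast hw')
        (by omega) (by omega) (by omega) (h1.2 hlt)
    have d2 : (v < v' ∨ v = v' ∧ u < w') → _ := fun hlt =>
      deltaLO_eq v ((u : ℤ) + 1) v' ((w' : ℤ) + 1) upper_cast upper_cast
        (by omega) (by omega) (by omega) (h2.2 hlt)
    simp only [c1, c2]
    clear c1 c2 h1 h2 m1 m2
    rw [← add_assoc (2 * m * v' + m) w' 1, ← add_assoc (2 * m * v + m) u 1]
    by_cases hvv : v < v'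
    · rw [if_pos hvv, d1 hvv, if_pos (Or.inl hvv), d2 (Or.inl hvv)]
      split_ifs <;> first | omega | ring
    · rw [if_neg hvv]
      by_cases hlt : v < v' ∨ v = v' ∧ u < w'
      · rw [if_pos hlt, d2 hlt]
        split_ifs <;> first | omega | ring
      · rw [if_neg hlt]
        split_ifs <;> omega
  rw [sum_congr rfl key, ← mul_sum, sum_add_distrib, sum_ite_eq, sum_ite_eq,
    if_pos (mem_range.2 hu), if_pos (mem_range.2 (by omega))]
  split_ifs <;> ring

theorem sum_delta (hm : 0 < m) (n : ℕ → ℕ) :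
    ∑ i ∈ (Icc 1 (2 * m * p)).filter (fun i => ¬ m ∣ i), ∑ j ∈ Icc (i + 1) (2 * m * p),
      deltaLO m i j * (n i : ℤ) * (n j : ℤ) =
    ∑ v ∈ range p, ∑ v' ∈ range p, ∑ u ∈ range (m - 1),
      ((n (2 * m * v + m - (u + 1)) : ℤ) *
        ((if v ≤ v' then (n (2 * m * v' + m + (u + 2)) : ℤ) + n (2 * m * v' + m + (u + 1))
            - n (2 * m * v' + m - u) else 0)
          - if v < v' then (n (2 * m * v' + m - (u + 1)) : ℤ) else 0)
      + (n (2 * m * v + m + (u + 1)) : ℤ) *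
        ((if v < v' then (n (2 * m * v' + m - u) : ℤ) + n (2 * m * v' + m - (u + 1))
            - n (2 * m * v' + m + (u + 1)) else 0)
          - if v ≤ v' then (n (2 * m * v' + m + (u + 2)) : ℤ) else 0)) := by
  have hzero : ∀ i, m ∣ i →
      ∑ j ∈ Icc (i + 1) (2 * m * p), deltaLO m i j * (n i : ℤ) * (n j : ℤ) = 0 := by
    intro i hi
    refine sum_eq_zero fun j _ => ?_
    rw [deltaLO, if_pos hi, zero_mul, zero_mul]
  rw [sum_filter_of_ne (p := fun i => ¬ m ∣ i) (fun i _ hne hi => hne (hzero i hi)),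
    sum_Icc_blocks]
  refine sum_congr rfl fun v _ => ?_
  rw [sum_comm]
  obtain ⟨M, hM⟩ := Nat.exists_eq_add_of_lt hm
  rw [zero_add] at hM
  rw [sum_add_distrib]
  conv_lhs => rw [hM, sum_range_succ' _ M, sum_range_succ _ M, ← hM]
  rw [hzero (2 * m * v + m - 0) (by
      rw [Nat.sub_zero, mul_assoc, mul_left_comm]; exact (dvd_mul_right _ _).add dvd_rfl),
    hzero (2 * m * v + m + M + 1) (by
      rw [show 2 * m * v + m + M + 1 = m * (2 * v + 2) by rw [mul_add, ← mul_assoc, mul_comm m 2]; omega]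
      exact dvd_mul_right _ _),
    add_zero, add_zero, ← sum_add_distrib, show m - 1 = M by omega]
  refine sum_congr rfl fun u hu => ?_
  rw [mem_range] at hu
  rw [sum_delta_lower n (by omega), sum_delta_upper n (by omega), ← sum_add_distrib]

theorem sum_beta (hm : 0 < m) {n : ℕ → ℕ} (h0 : n 0 = 0) :
    ∑ i ∈ Icc 1 (2 * m * p - 1), betLO m i * (n i : ℤ) =
      ∑ v ∈ range p, ∑ u ∈ range (m - 1),
        ((n (2 * m * v + m - (u + 1)) : ℤ) - n (2 * m * v + m + (u + 1))) := by
  have hb : ∀ v x, x < 2 * m → betLO m (2 * m * v + x) =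
      if 1 ≤ x ∧ x ≤ m - 1 then 1 else if m + 1 ≤ x ∧ x ≤ 2 * m - 1 then -1 else 0 := by
    intro v x hx
    rw [betLO, Nat.mul_add_mod, Nat.mod_eq_of_lt hx]
  rw [sum_Icc_shift (by simp [h0]), sum_Icc_blocks]
  refine sum_congr rfl fun v _ => ?_
  obtain ⟨M, hM⟩ := Nat.exists_eq_add_of_lt hm
  rw [zero_add] at hM
  rw [sum_add_distrib]
  conv_lhs => rw [hM, sum_range_succ _ M, sum_range_succ' _ M, ← hM]
  rw [show 2 * m * v + m - M - 1 = 2 * m * v + 0 by omega,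
    show 2 * m * v + m + 0 + 1 - 1 = 2 * m * v + m by omega, hb v 0 (by omega),
    hb v m (by omega), if_neg (by omega), if_neg (by omega), if_neg (by omega), if_neg (by omega),
    zero_mul, zero_mul, add_zero, add_zero, ← sum_add_distrib, show m - 1 = M by omega]
  refine sum_congr rfl fun u hu => ?_
  rw [mem_range] at hu
  have e1 : 2 * m * v + m - u - 1 = 2 * m * v + (m - (u + 1)) := by omega
  have e2 : 2 * m * v + m + (u + 1) + 1 - 1 = 2 * m * v + (m + (u + 1)) := by omega
  rw [e1, e2, hb v _ (by omega), hb v _ (by omega), if_pos (by omega), if_neg (by omega),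
    if_pos (by omega), ← Nat.add_sub_assoc (by omega), ← add_assoc]
  ring

/-- Sums over the positive multiples of `m` below `2mp`. -/
theorem sum_multiples {M : Type*} [AddCommMonoid M] {n : ℕ → ℕ} (h0 : n 0 = 0) (m p : ℕ)
    (G : ℕ → ℕ → M) (hG : ∀ i, G i 0 = 0) :
    ∑ i ∈ Icc 1 (2 * p - 1), G i (n (m * i)) =
      ∑ v ∈ range p, (G (2 * v) (n (2 * m * v)) + G (2 * v + 1) (n (2 * m * v + m))) := by
  rw [sum_Icc_shift (by simp [h0, hG]), show 2 * p = 2 * 1 * p by ring, sum_Icc_blocks]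
  refine sum_congr rfl fun v _ => ?_
  rw [sum_range_one]
  simp only [Nat.sub_zero, Nat.add_sub_cancel, mul_one, add_zero]
  rw [show m * (2 * v) = 2 * m * v by ring, show m * (2 * v + 1) = 2 * m * v + m by ring]

end DoubleTwist

theorem sum_square_eq (f : ℕ → ℕ → ℤ) (p : ℕ) :
    ∑ v ∈ range p, ∑ v' ∈ range p, f v v' =
      ∑ b ∈ range p, (f b b + ∑ a ∈ range b, (f a b + f b a)) := by
  induction p with
  | zero => simp
  | succ p ih =>
    rw [sum_range_succ (fun b => f b b + _), ← ih, sum_range_succ (fun v => ∑ v' ∈ _, f v v')]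
    simp only [sum_range_succ _ p, sum_add_distrib]
    ring

/-- The contribution of a pair of distinct blocks to the quadratic part of the exponents. -/
theorem quadratic_pair (A B A' B' : ℕ → ℤ) (M : ℕ) (hAB : A 0 = B 0) (hAB' : A' 0 = B' 0) :
    ∑ w ∈ range (M + 1), ((B' (w + 1) - A' w) * A (w + 1) - (B' (w + 1) - A' w) * B w)
      + ∑ w ∈ range (M + 1), ((B (w + 1) - A (w + 1)) * A' (w + 1) - (B w - A w) * B' w)
      - ∑ w ∈ range (M + 1), ((A' w - A' (w + 1)) * (B (M + 1) - B (w + 1))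
          - (B' (w + 1) - B' w) * (A w - A (M + 1)))
      - ∑ u ∈ range M, (A (u + 1) * (B' (u + 2) + B' (u + 1) - A' u - A' (u + 1))
          + B (u + 1) * (A' u + A' (u + 1) - B' (u + 1) - B' (u + 2)))
    = (B (M + 1) - A (M + 1)) * (A' M - A' 0 + A' (M + 1)) := by
  have key : ∀ x y K, ∑ w ∈ range K, ((B' (w + 1) - A' w) * A (w + 1) - (B' (w + 1) - A' w) * B w)
      + ∑ w ∈ range K, ((B (w + 1) - A (w + 1)) * A' (w + 1) - (B w - A w) * B' w)
      - ∑ w ∈ range K, ((A' w - A' (w + 1)) * (y - B (w + 1)) - (B' (w + 1) - B' w) * (A w - x))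
      - ∑ u ∈ range K, (A (u + 1) * (B' (u + 2) + B' (u + 1) - A' u - A' (u + 1))
          + B (u + 1) * (A' u + A' (u + 1) - B' (u + 1) - B' (u + 2)))
      = -B 0 * B' 1 + B 0 * A' 0 - B 0 * B' 0 + A 0 * B' 1
        - (-B K * B' (K + 1) + B K * A' K - B K * B' K + A K * B' (K + 1))
        - x * (B' K - B' 0) + y * (A' K - A' 0) := by
    intro x y K
    induction K with
    | zero => simp
    | succ K ih =>
      simp only [sum_range_succ _ K]
      linear_combination ih
  have := key (A (M + 1)) (B (M + 1)) M
  simp only [sum_range_succ _ M]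
  rw [hAB, hAB'] at *
  linear_combination this

/-- The contribution of a single block to the quadratic part of the exponents. -/
theorem quadratic_diag (A B : ℕ → ℤ) (M : ℕ) (hAB : A 0 = B 0) :
    2 * (∑ w ∈ range (M + 1), ((B (w + 1) - A (w + 1)) * A (w + 1) - (B (w + 1) - A w) * B w)
      - ∑ w ∈ range (M + 1), (0 - (B (w + 1) - B w) * (A w - A (M + 1)))
      - ∑ u ∈ range M, (A (u + 1) * (B (u + 2) + B (u + 1) - A u)
          - B (u + 1) * B (u + 2)))
      + ∑ w ∈ range (M + 1), (A w - A (w + 1)) ^ 2 - (A 0 ^ 2 + A (M + 1) ^ 2)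
    = -2 * (A (M + 1) * (A M - A 0 + A (M + 1))) := by
  have key : ∀ x K,
      2 * (∑ w ∈ range K, ((B (w + 1) - A (w + 1)) * A (w + 1) - (B (w + 1) - A w) * B w)
        - ∑ w ∈ range K, (0 - (B (w + 1) - B w) * (A w - x))
        - ∑ u ∈ range K, (A (u + 1) * (B (u + 2) + B (u + 1) - A u)
            - B (u + 1) * B (u + 2)))
        + ∑ w ∈ range K, (A w - A (w + 1)) ^ 2
      = 2 * (A 0 * B 1 - B 0 * B 1) - 2 * (A K * B (K + 1) - B K * B (K + 1))
        + A 0 ^ 2 - A K ^ 2 - 2 * x * (B K - B 0) := by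
    intro x K
    induction K with
    | zero => simp
    | succ K ih =>
      simp only [sum_range_succ _ K]
      linear_combination ih
  have := key (A (M + 1)) M
  simp only [sum_range_succ _ M]
  rw [hAB] at *
  linear_combination this

/-- The quadratic part of the exponents, in terms of the entries `A v w` and `B v w` at distance
`w` before and after the centre of the `v`-th block. -/
theorem quadratic_identity (A B : ℕ → ℕ → ℤ) {m : ℕ} (hm : 0 < m) (p : ℕ) (h0 : A 0 m = 0)
    (hAB : ∀ v, A v 0 = B v 0) (hstep : ∀ v, A (v + 1) m = B v m) :
    2 * (∑ v ∈ range p, ∑ v' ∈ range p, ∑ w ∈ range m,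
        ((B v' (w + 1) - A v' (if v' ≤ v then w + 1 else w)) * A v (w + 1)
          - (B v' (if v ≤ v' then w + 1 else w) - A v' w) * B v w)
      - ∑ v ∈ range p, ∑ v' ∈ range p, ∑ w ∈ range m,
        ((if v' < v then (A v w - A v (w + 1)) * (B v' m - B v' (w + 1)) else 0)
          - (if v' ≤ v then (B v (w + 1) - B v w) * (A v' w - A v' m) else 0)))
      + ∑ v ∈ range p, ∑ w ∈ range m, (A v w - A v (w + 1)) ^ 2
    = 2 * ∑ v ∈ range p, ∑ v' ∈ range p, ∑ u ∈ range (m - 1),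
        (A v (u + 1) * ((if v ≤ v' then B v' (u + 2) + B v' (u + 1) - A v' u else 0)
            - if v < v' then A v' (u + 1) else 0)
          + B v (u + 1) * ((if v < v' then A v' u + A v' (u + 1) - B v' (u + 1) else 0)
            - if v ≤ v' then B v' (u + 2) else 0))
      + ∑ v ∈ range p, (A v 0 ^ 2 + A v m ^ 2) := by
  obtain ⟨M, rfl⟩ : ∃ M, m = M + 1 := ⟨m - 1, by omega⟩
  rw [← sub_eq_zero, Nat.add_sub_cancel]
  have comb : ∀ (f g k : ℕ → ℕ → ℤ) (s r : ℕ → ℤ) (e : ℕ → ℕ → ℤ),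
      (∀ a b, a < b → f a b + f b a - (g a b + g b a) - (k a b + k b a) = e a b) →
      (∀ b, 2 * (f b b - g b b - k b b) + s b - r b = -2 * ∑ a ∈ range b, e a b) →
      2 * (∑ v ∈ range p, ∑ v' ∈ range p, f v v' - ∑ v ∈ range p, ∑ v' ∈ range p, g v v')
          + ∑ v ∈ range p, s v - (2 * ∑ v ∈ range p, ∑ v' ∈ range p, k v v' + ∑ v ∈ range p, r v)
        = 0 := by
    intro f g k s r e hpair hdiag
    have : ∑ b ∈ range p, (2 * (f b b - g b b - k b b) + s b - r b
        + 2 * ∑ a ∈ range b, (f a b + f b a - (g a b + g b a) - (k a b + k b a))) = 0 := by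
      refine sum_eq_zero fun b _ => ?_
      rw [hdiag, sum_congr rfl fun a ha => hpair a b (mem_range.1 ha)]
      ring
    rw [sum_square_eq f, sum_square_eq g, sum_square_eq k, ← this]
    simp only [sum_add_distrib, sum_sub_distrib, mul_sum, mul_add, mul_sub]
    ring
  have tele : ∀ b, ∑ a ∈ range b, (B a (M + 1) - A a (M + 1)) = A b (M + 1) := by
    intro b
    rw [← sub_zero (A b (M + 1)), ← h0, ← sum_range_sub (fun a => A a (M + 1))]
    exact sum_congr rfl fun a _ => by rw [hstep]
  refine comb _ _ _ _ _
    (fun a b => (B a (M + 1) - A a (M + 1)) * (A b M - A b 0 + A b (M + 1))) ?_ ?_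
  · intro a b hab
    rw [← quadratic_pair (A a) (B a) (A b) (B b) M (hAB a) (hAB b)]
    simp only [hab, hab.le, hab.not_ge, hab.not_gt, if_true, if_false, sub_self, mul_zero,
      add_zero, sum_const_zero, zero_add]
  · intro b
    rw [← sum_mul, tele, ← quadratic_diag (A b) (B b) M (hAB b)]
    simp [sub_eq_add_neg]

theorem two_mul_triangle (x : ℤ) : 2 * (x * (x + 1) / 2) = x ^ 2 + x := by
  rw [Int.two_mul_ediv_two_of_even (Int.even_mul_succ_self x)]
  ring

namespace DoubleTwist

variable {m p l t : ℕ}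

/-- The linear part of the exponents in a single block. -/
theorem linear_identity (A B : ℕ → ℤ) {m : ℕ} (hm : 0 < m) (hAB : A 0 = B 0) :
    2 * (2 * A 0 - ∑ w ∈ range m, (B w + A (w + 1)) + ∑ w ∈ range m, A w
        + ∑ w ∈ range m, A (w + 1) + A m - 2 * A 0)
      + ∑ w ∈ range m, (A w - A (w + 1)) =
    2 * ∑ u ∈ range (m - 1), (A (u + 1) - B (u + 1)) + A 0 + A m := by
  obtain ⟨M, rfl⟩ : ∃ M, m = M + 1 := ⟨m - 1, by omega⟩
  rw [sum_range_sub', sum_add_distrib, sum_range_succ' B, sum_range_succ' A, Nat.add_sub_cancel,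
    sum_sub_distrib]
  linear_combination 2 * hAB

/-- Comparison of the exponents of `q` on the two sides. -/
theorem exponent_eq (h : DoubleTwist m p l t) {n : ℕ → ℕ} (h0 : n 0 = 0) (N : ℤ) :
    aT l t n * N + b1T l t n + b2T l t n
      + ∑ v ∈ range p, ∑ w ∈ range m,
        ((n (2 * m * v + m - w) : ℤ) - n (2 * m * v + m - (w + 1)))
          * ((n (2 * m * v + m - w) : ℤ) - n (2 * m * v + m - (w + 1)) + 1) / 2 =
    ∑ i ∈ (Icc 1 (2 * m * p)).filter (fun i => ¬ m ∣ i), ∑ j ∈ Icc (i + 1) (2 * m * p),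
        deltaLO m i j * (n i : ℤ) * (n j : ℤ)
      + ∑ i ∈ Icc 1 (2 * p - 1), ((-1) ^ (i + 1) * N * (n (m * i) : ℤ)
          + (n (m * i) : ℤ) * ((n (m * i) : ℤ) + 1) / 2)
      + ∑ i ∈ Icc 1 (2 * m * p - 1), betLO m i * (n i : ℤ) := by
  have hm := h.hm
  have quad := quadratic_identity (fun v w => (n (2 * m * v + m - w) : ℤ))
    (fun v w => (n (2 * m * v + m + w) : ℤ)) hm p (by simp [h0]) (fun v => by simp)
    (fun v => by congr 2; rw [Nat.add_sub_cancel]; ring)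
  have lin : ∑ v ∈ range p, _ = ∑ v ∈ range p, _ :=
    sum_congr rfl fun v _ => linear_identity (fun w => (n (2 * m * v + m - w) : ℤ))
      (fun w => (n (2 * m * v + m + w) : ℤ)) hm (by simp)
  have mult := sum_multiples h0 m p
    (fun i x => (-1) ^ (i + 1) * N * (x : ℤ) + (x : ℤ) * ((x : ℤ) + 1) / 2) (by simp)
  have squares : 2 * ∑ v ∈ range p,
        ((-1) ^ (2 * v + 1) * N * (n (2 * m * v) : ℤ)
          + (n (2 * m * v) : ℤ) * ((n (2 * m * v) : ℤ) + 1) / 2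
        + ((-1) ^ (2 * v + 1 + 1) * N * (n (2 * m * v + m) : ℤ)
          + (n (2 * m * v + m) : ℤ) * ((n (2 * m * v + m) : ℤ) + 1) / 2)) =
      2 * N * ∑ v ∈ range p, ((n (2 * m * v + m) : ℤ) - n (2 * m * v))
        + ∑ v ∈ range p, ((n (2 * m * v + m) : ℤ) ^ 2 + (n (2 * m * v) : ℤ) ^ 2)
        + ∑ v ∈ range p, (n (2 * m * v + m) : ℤ) + ∑ v ∈ range p, (n (2 * m * v) : ℤ) := by
    rw [mul_sum, mul_sum, ← sum_add_distrib, ← sum_add_distrib, ← sum_add_distrib]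
    refine sum_congr rfl fun v _ => ?_
    rw [pow_succ _ (2 * v + 1), pow_succ, pow_mul]
    linear_combination two_mul_triangle (n (2 * m * v)) + two_mul_triangle (n (2 * m * v + m))
  have triangles : 2 * ∑ v ∈ range p, ∑ w ∈ range m,
        ((n (2 * m * v + m - w) : ℤ) - n (2 * m * v + m - (w + 1)))
          * ((n (2 * m * v + m - w) : ℤ) - n (2 * m * v + m - (w + 1)) + 1) / 2 =
      ∑ v ∈ range p, ∑ w ∈ range m,
          ((n (2 * m * v + m - w) : ℤ) - n (2 * m * v + m - (w + 1))) ^ 2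
        + ∑ v ∈ range p, ∑ w ∈ range m,
          ((n (2 * m * v + m - w) : ℤ) - n (2 * m * v + m - (w + 1))) := by
    simp only [mul_sum, two_mul_triangle, sum_add_distrib]
  rw [mult, h.b2T_eq, sum_delta hm, sum_beta hm h0, b1T, h.half_sub_one, h.half_sub, h.sum_first,
    h.sum_pred, h.sum_pos, h.sigma_last, h.sum_sigma_diff h0, h.sum_inversions, h.sum_sigma_upto,
    h.aT_eq h0]
  refine mul_left_cancel₀ (two_ne_zero (α := ℤ)) ?_
  rw [sum_add_distrib, ← mul_sum, sum_sub_distrib, sum_add_distrib, sum_add_distrib,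
    sum_add_distrib, sum_sub_distrib, sum_add_distrib, sum_add_distrib, ← mul_sum, ← mul_sum] at lin
  simp only [Nat.sub_zero, Nat.add_sub_cancel] at lin quad ⊢
  rw [sum_sub_distrib (s := range p) (fun v => ∑ w ∈ range m, (_ + _)),
    sum_sub_distrib (s := range p) (fun v => ∑ w ∈ range m, _)]
  have diff := sum_sub_distrib (s := range p) (fun v => (n (2 * m * v + m) : ℤ))
    (fun v => (n (2 * m * v) : ℤ))
  have diff' := sum_sub_distrib (s := range p) (fun v => (n (2 * m * v) : ℤ))
    (fun v => (n (2 * m * v + m) : ℤ))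
  linear_combination lin + quad + triangles - squares - 2 * diff + 2 * diff'

end DoubleTwist

theorem prod_zpow_eq_zpow_sum {ι : Type*} {q : ℂ} (hq : q ≠ 0) (s : Finset ι) (f : ι → ℤ) :
    ∏ i ∈ s, q ^ f i = q ^ ∑ i ∈ s, f i := by
  classical
  induction s using Finset.induction_on with
  | empty => simp
  | insert a s ha ih => rw [prod_insert ha, sum_insert ha, zpow_add₀ hq, ih]

theorem qPoch_succ (a q : ℂ) (n : ℕ) : qPoch a q (n + 1) = qPoch a q n * (1 - a * q ^ n) :=
  prod_range_succ _ n

theorem qPoch_ne_zero_of_le {a q : ℂ} {k n : ℕ} (hkn : k ≤ n) (hn : qPoch a q n ≠ 0) :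
    qPoch a q k ≠ 0 := by
  rw [qPoch, prod_ne_zero_iff] at *
  exact fun i hi => hn i (mem_range.2 ((mem_range.1 hi).trans_le hkn))

theorem gaussPoly_eq_zero_of_lt {n k : ℕ} (hnk : n < k) : gaussPoly n k = 0 := by
  induction n generalizing k with
  | zero =>
    obtain ⟨k, rfl⟩ : ∃ k', k = k' + 1 := ⟨k - 1, by omega⟩
    rw [gaussPoly]
  | succ n ih =>
    obtain ⟨k, rfl⟩ : ∃ k', k = k' + 1 := ⟨k - 1, by omega⟩
    rw [gaussPoly, ih (by omega), ih (by omega), mul_zero, add_zero]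

theorem gbin_succ_succ (q : ℂ) (n k : ℕ) :
    gbin q (n + 1) (k + 1) = gbin q n k + q ^ (k + 1) * gbin q n (k + 1) := by
  simp [gbin, gaussPoly]

theorem gbin_mul_qPoch (q : ℂ) {n k : ℕ} (hkn : k ≤ n) :
    gbin q n k * (qPoch q q k * qPoch q q (n - k)) = qPoch q q n := by
  induction n generalizing k with
  | zero =>
    obtain rfl : k = 0 := by omega
    simp [gbin, gaussPoly, qPoch]
  | succ n ih =>
    rcases k with _ | k
    · simp [gbin, gaussPoly, qPoch]
    rw [gbin_succ_succ, qPoch_succ, qPoch_succ, Nat.add_sub_add_right]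
    have hk := ih (k := k) (by omega)
    rcases (Nat.lt_succ_iff.1 hkn).eq_or_lt with rfl | hlt
    · rw [gbin, gbin, gaussPoly_eq_zero_of_lt (Nat.lt_succ_self k), map_zero, ← gbin]
      linear_combination (1 - q * q ^ k) * hk
    · obtain ⟨a, rfl⟩ := Nat.exists_eq_add_of_lt hlt
      have hk' := ih (k := k + 1) (by omega)
      rw [show k + a + 1 - k = a + 1 by omega] at hk ⊢
      rw [show k + a + 1 - (k + 1) = a by omega, qPoch_succ _ _ k] at hk'
      rw [qPoch_succ _ _ a] at hk ⊢
      linear_combination (1 - q * q ^ k) * hk + q ^ (k + 1) * (1 - q * q ^ a) * hk'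

theorem prod_gbin_mul_prod_qPoch (q : ℂ) {n : ℕ → ℕ} (h0 : n 0 = 0) (K : ℕ)
    (hn : ∀ i ≤ K, n i ≤ n (i + 1)) :
    (∏ i ∈ Icc 1 K, gbin q (n (i + 1)) (n i)) * ∏ j ∈ Icc 1 (K + 1), qPoch q q (n j - n (j - 1))
      = qPoch q q (n (K + 1)) := by
  induction K with
  | zero => simp [h0]
  | succ K ih =>
    rw [prod_Icc_succ_top (by omega), prod_Icc_succ_top (by omega) (f := fun j => qPoch _ _ _),
      ← gbin_mul_qPoch q (hn (K + 1) le_rfl), ← ih fun i hi => hn i (by omega),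
      Nat.add_sub_cancel]
    ring

theorem qPoch_zpow_mul {q : ℂ} (hq : q ≠ 0) {N n : ℕ} (hn : n < N) :
    qPoch (q ^ (1 - (N : ℤ))) q n * qPoch q q (N - n - 1) =
      (-1) ^ n * q ^ (-(N : ℤ) * n + (n : ℤ) * ((n : ℤ) + 1) / 2) * qPoch q q (N - 1) := by
  induction n with
  | zero => simp [qPoch]
  | succ n ih =>
    have hlast : qPoch q q (N - n - 1)
        = qPoch q q (N - (n + 1) - 1) * (1 - q ^ ((N : ℤ) - n - 1)) := by
      obtain ⟨a, rfl⟩ := Nat.exists_eq_add_of_lt hn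
      rw [show n + 1 + a + 1 - n - 1 = a + 1 by omega,
        show n + 1 + a + 1 - (n + 1) - 1 = a by omega, qPoch_succ,
        show ((n + 1 + a + 1 : ℕ) : ℤ) - n - 1 = (a + 1 : ℕ) by push_cast; ring, zpow_natCast,
        pow_succ']
    have htri : ((n + 1 : ℕ) : ℤ) * (((n + 1 : ℕ) : ℤ) + 1) / 2
        = (n : ℤ) * ((n : ℤ) + 1) / 2 + (n + 1) := by
      have h1 := two_mul_triangle n
      have h2 := two_mul_triangle (n + 1 : ℕ)
      push_cast at *
      linarith
    have hneg : 1 - q ^ (1 - (N : ℤ)) * q ^ n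
        = -q ^ (n + 1 - (N : ℤ)) * (1 - q ^ ((N : ℤ) - n - 1)) := by
      rw [mul_sub, mul_one, neg_mul, ← zpow_add₀ hq, ← zpow_natCast, ← zpow_add₀ hq,
        show (n + 1 - (N : ℤ)) + ((N : ℤ) - n - 1) = 0 by ring, zpow_zero,
        show 1 - (N : ℤ) + n = n + 1 - (N : ℤ) by ring]
      ring
    have hexp : -(N : ℤ) * (n + 1 : ℕ) + ((n + 1 : ℕ) : ℤ) * (((n + 1 : ℕ) : ℤ) + 1) / 2
        = -(N : ℤ) * n + (n : ℤ) * ((n : ℤ) + 1) / 2 + (n + 1 - (N : ℤ)) := by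
      rw [htri]
      push_cast
      ring
    have ih := ih (by omega)
    rw [hlast] at ih
    rw [qPoch_succ, hneg, hexp, zpow_add₀ hq, pow_succ]
    linear_combination -q ^ (n + 1 - (N : ℤ)) * ih

theorem prod_neg_one_pow_sub (a : ℕ → ℕ) (K : ℕ) (ha : ∀ w < K, a w ≤ a (w + 1)) :
    ∏ w ∈ range K, (-1 : ℂ) ^ (a (w + 1) - a w) = (-1) ^ a 0 * (-1) ^ a K := by
  induction K with
  | zero => rw [← mul_pow]; simp
  | succ K ih =>
    rw [prod_range_succ, ih fun w hw => ha w (by omega), mul_assoc, ← pow_add,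
      Nat.add_sub_cancel' (ha K (by omega))]

namespace DoubleTwist

variable {m p l t : ℕ}

theorem prod_tauT (h : DoubleTwist m p l t) {q : ℂ} (hq : q ≠ 0) {n : ℕ → ℕ}
    (hn : ∀ i < 2 * m * p, n i ≤ n (i + 1)) :
    ∏ j ∈ Icc 1 (2 * m * p), tauT l t q n j =
      q ^ (∑ v ∈ range p, ∑ w ∈ range m,
        ((n (2 * m * v + m - w) : ℤ) - n (2 * m * v + m - (w + 1)))
          * ((n (2 * m * v + m - w) : ℤ) - n (2 * m * v + m - (w + 1)) + 1) / 2)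
      * ∏ v ∈ range p, ((-1) ^ n (2 * m * v + m) * (-1) ^ n (2 * m * (v + 1))) := by
  rw [prod_Icc_blocks, ← prod_zpow_eq_zpow_sum hq, ← prod_mul_distrib]
  refine prod_congr rfl fun v hv => ?_
  rw [mem_range] at hv
  have hle : 2 * m * v + 2 * m ≤ 2 * m * p := by nlinarith
  have sign := prod_neg_one_pow_sub (fun w => n (2 * m * v + m + w)) m
    fun w hw => hn (2 * m * v + m + w) (by omega)
  rw [add_zero, show 2 * m * v + m + m = 2 * m * (v + 1) by ring] at sign
  rw [← prod_zpow_eq_zpow_sum hq, ← sign, ← prod_mul_distrib]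
  refine prod_congr rfl fun w hw => ?_
  rw [mem_range] at hw
  rw [tauT, tauT, h.sigma_lower hv hw, h.sigma_upper hv hw, if_neg (by decide), if_pos rfl,
    Nat.sub_sub, Nat.add_sub_cancel, add_assoc (2 * m * v + m) w 1]

theorem prod_sign_multiples {n : ℕ → ℕ} (h0 : n 0 = 0) (m p : ℕ) :
    ∏ i ∈ Icc 1 (2 * p - 1), (-1 : ℂ) ^ n (m * i) =
      (-1) ^ n (2 * m * p)
        * ∏ v ∈ range p, ((-1) ^ n (2 * m * v + m) * (-1) ^ n (2 * m * (v + 1))) := by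
  have mult : ∏ i ∈ Icc 1 (2 * p - 1), (-1 : ℂ) ^ n (m * i) =
      ∏ v ∈ range p, ((-1) ^ n (2 * m * v) * (-1) ^ n (2 * m * v + m)) :=
    sum_multiples (M := Additive ℂ) h0 m p (fun _ x => Additive.ofMul ((-1 : ℂ) ^ x))
      fun _ => congrArg Additive.ofMul (pow_zero (-1 : ℂ))
  have tele := (prod_range_succ (fun v => (-1 : ℂ) ^ n (2 * m * v)) p).symm.trans
    (prod_range_succ' _ p)
  have hsq : ((-1 : ℂ) ^ n (2 * m * p)) ^ 2 = 1 := by rw [← pow_mul', pow_mul]; simp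
  rw [mul_zero, h0, pow_zero, mul_one] at tele
  rw [mult, prod_mul_distrib, prod_mul_distrib, ← tele]
  linear_combination (-(∏ v ∈ range p, (-1 : ℂ) ^ n (2 * m * v))
    * ∏ v ∈ range p, (-1 : ℂ) ^ n (2 * m * v + m)) * hsq

/-- The two summands agree for each tuple. -/
theorem summand_eq (h : DoubleTwist m p l t) {N : ℕ} {q : ℂ} (hq : q ≠ 0)
    (hqN : qPoch q q (N - 1) ≠ 0) {n : ℕ → ℕ} (h0 : n 0 = 0)
    (hn : ∀ i < 2 * m * p, n i ≤ n (i + 1)) (hlt : ∀ i, n i < N) :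
    q ^ (aT l t n * (N : ℤ) + b1T l t n + b2T l t n) * XT l t N q n =
      qPoch (q ^ (1 - (N : ℤ))) q (n (2 * m * p)) *
          (-1 : ℂ) ^ (n (2 * m * p)) *
          q ^ (-(((n (2 * m * p) : ℤ) * ((n (2 * m * p) : ℤ) + 1)) / 2)) *
          (∏ i ∈ (Icc 1 (2 * m * p)).filter (fun i => ¬ m ∣ i),
            ∏ j ∈ Icc (i + 1) (2 * m * p),
              q ^ (deltaLO m i j * (n i : ℤ) * (n j : ℤ))) *
          (∏ i ∈ Icc 1 (2 * p - 1),
            (-1 : ℂ) ^ (n (m * i)) *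
              q ^ ((-1 : ℤ) ^ (i + 1) * (N : ℤ) * (n (m * i) : ℤ)
                    + ((n (m * i) : ℤ) * ((n (m * i) : ℤ) + 1)) / 2)) *
          (∏ i ∈ Icc 1 (2 * m * p - 1),
            q ^ (betLO m i * (n i : ℤ)) * gbin q (n (i + 1)) (n i)) := by
  have hP : 2 * m * p - 1 + 1 = 2 * m * p := by
    have := h.p_le
    have := h.hp
    omega
  have hne : ∀ k < N, qPoch q q k ≠ 0 := fun k hk => qPoch_ne_zero_of_le (by omega) hqN
  have hden : ∏ j ∈ Icc 1 (2 * m * p), qPoch q q (n j - n (j - 1)) ≠ 0 :=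
    prod_ne_zero_iff.2 fun j _ => hne _ ((Nat.sub_le _ _).trans_lt (hlt j))
  have hgbin := prod_gbin_mul_prod_qPoch q h0 (2 * m * p - 1) fun i hi => hn i (by omega)
  rw [hP] at hgbin
  have hpoch := qPoch_zpow_mul hq (hlt (2 * m * p))
  have hlast : qPoch q q (N - n (2 * m * p) - 1) ≠ 0 :=
    hne _ (by have := hlt (2 * m * p); omega)
  have hexp := congrArg (q ^ ·) (h.exponent_eq h0 N)
  simp only [zpow_add₀ hq _ (∑ i ∈ _, _)] at hexp
  have hsq : ((-1 : ℂ) ^ n (2 * m * p)) ^ 2 = 1 := by rw [← pow_mul', pow_mul]; simp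
  have hU := zpow_ne_zero ((n (2 * m * p) : ℤ) * ((n (2 * m * p) : ℤ) + 1) / 2) hq
  rw [XT, kapT, h.half_sub_one, h.sigma_last, if_pos rfl, prod_div_distrib,
    h.prod_tauT hq hn, ← hgbin, eq_div_of_mul_eq hlast hpoch,
    prod_mul_distrib (s := Icc 1 (2 * p - 1)), prod_mul_distrib (s := Icc 1 (2 * m * p - 1)),
    prod_sign_multiples h0, prod_zpow_eq_zpow_sum hq (Icc 1 (2 * p - 1)),
    prod_zpow_eq_zpow_sum hq (Icc 1 (2 * m * p - 1)), zpow_add₀ hq (-(N : ℤ) * _), zpow_neg]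
  simp only [prod_zpow_eq_zpow_sum hq]
  field_simp
  rw [hsq, one_mul, mul_right_comm (q ^ _) (∏ i ∈ _, gbin _ _ _) (q ^ _), hexp]
  ac_rfl

end DoubleTwist

theorem extTup_zero {P N : ℕ} (f : Fin P → Fin N) : extTup P N f 0 = 0 :=
  dif_neg (by omega)

theorem extTup_le_succ {P N : ℕ} {f : Fin P → Fin N} (hf : ∀ i j, i ≤ j → f i ≤ f j) :
    ∀ i < P, extTup P N f i ≤ extTup P N f (i + 1) := by
  intro i hi
  rcases i with _ | i
  · simp [extTup_zero]
  · rw [extTup, extTup, dif_pos (by omega), dif_pos (by omega)]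
    exact hf _ _ (Fin.mk_le_mk.2 (by omega))

theorem extTup_lt {P N : ℕ} (hN : 0 < N) (f : Fin P → Fin N) (i : ℕ) : extTup P N f i < N := by
  rw [extTup]
  split_ifs
  · exact (f _).isLt
  · exact hN

/-- Theorem 1.2 (Lovejoy–Osburn): the colored Jones polynomial of the double twist
knot `K_(-m,p)`, i.e. Takata's sum for `l = 4mp+1`, `t = 4mp-2p+1`, equals the stated
multiple `q`-hypergeometric sum. -/
theorem colored_jones_double_twist_neg_pos
    (m p N : ℕ) (hm : 0 < m) (hp : 0 < p) (hN : 0 < N)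
    (q : ℂ) (hq : q ≠ 0) (hqN : qPoch q q (N - 1) ≠ 0) :
    (∑ f ∈ Finset.univ.filter
        (fun f : Fin (2 * m * p) → Fin N => ∀ i j, i ≤ j → f i ≤ f j),
      let n := extTup (2 * m * p) N f
      q ^ (aT (4 * m * p + 1) (4 * m * p - 2 * p + 1) n * (N : ℤ)
            + b1T (4 * m * p + 1) (4 * m * p - 2 * p + 1) n
            + b2T (4 * m * p + 1) (4 * m * p - 2 * p + 1) n) *
        XT (4 * m * p + 1) (4 * m * p - 2 * p + 1) N q n)
    = ∑ f ∈ Finset.univ.filter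
          (fun f : Fin (2 * m * p) → Fin N => ∀ i j, i ≤ j → f i ≤ f j),
        let n := extTup (2 * m * p) N f
        qPoch (q ^ (1 - (N : ℤ))) q (n (2 * m * p)) *
          (-1 : ℂ) ^ (n (2 * m * p)) *
          q ^ (-(((n (2 * m * p) : ℤ) * ((n (2 * m * p) : ℤ) + 1)) / 2)) *
          (∏ i ∈ (Icc 1 (2 * m * p)).filter (fun i => ¬ m ∣ i),
            ∏ j ∈ Icc (i + 1) (2 * m * p),
              q ^ (deltaLO m i j * (n i : ℤ) * (n j : ℤ))) *
          (∏ i ∈ Icc 1 (2 * p - 1),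
            (-1 : ℂ) ^ (n (m * i)) *
              q ^ ((-1 : ℤ) ^ (i + 1) * (N : ℤ) * (n (m * i) : ℤ)
                    + ((n (m * i) : ℤ) * ((n (m * i) : ℤ) + 1)) / 2)) *
          (∏ i ∈ Icc 1 (2 * m * p - 1),
            q ^ (betLO m i * (n i : ℤ)) * gbin q (n (i + 1)) (n i)) := by
  have h : DoubleTwist m p (4 * m * p + 1) (4 * m * p - 2 * p + 1) := ⟨hm, hp, rfl, rfl⟩
  refine sum_congr rfl fun f hf => ?_
  exact h.summand_eq hq hqN (extTup_zero f) (extTup_le_succ (mem_filter.1 hf).2) (extTup_lt hN f)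

end
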